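/- arXiv:math/0609760 — 4 statements merged into one kernel-verified Lean document; each statement's English description precedes it below -/
import Mathlib

section
/- Let G be an arbitrary finite abelian group, F an algebraically closed field of characteristic different from 2, and R a G-graded finite-dimensional associative superalgebra which is simple as an associative algebra and whose G-grading is elementary. Then, as a G-graded superalgebra, R is isomorphic to one of the superalgebras Q(θ;h) or A(θ;p̄). -/
open scoped TensorProduct

/-- A `G`-grading on an `F`-algebra `R`: an internal direct sum vector-space
decomposition `R = ⊕_{g ∈ G} A g` with `A g * A h ⊆ A (g * h)`. -/
structure IsAlgGrading (F : Type*) [Field F] (G : Type*) [Group G] [DecidableEq G]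
    {R : Type*} [Ring R] [Algebra F R] (A : G → Submodule F R) : Prop where
  internal : DirectSum.IsInternal A
  mul_mem : ∀ {g h : G} {x y : R}, x ∈ A g → y ∈ A h → x * y ∈ A (g * h)

/-- A superalgebra structure on an `F`-algebra `R`: a `ℤ₂`-grading `R = R₀ ⊕ R₁`. -/
structure IsSuperGrading (F : Type*) [Field F] {R : Type*} [Ring R] [Algebra F R]
    (S : ZMod 2 → Submodule F R) : Prop where
  internal : DirectSum.IsInternal S
  mul_mem : ∀ {p q : ZMod 2} {x y : R}, x ∈ S p → y ∈ S q → x * y ∈ S (p + q)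

/-- The sign `(-1)^{pq}` occurring in the superinvolution identity. -/
def superSign (F : Type*) [Field F] (p q : ZMod 2) : F := if p = 1 ∧ q = 1 then -1 else 1

/-- A superinvolution on a superalgebra `R = ⊕ S p`:
a `ℤ₂`-graded linear map of order 2 with `(ab)* = (-1)^{|a||b|} b* a*`. -/
structure IsSuperinvolution (F : Type*) [Field F] {R : Type*} [Ring R] [Algebra F R]
    (S : ZMod 2 → Submodule F R) (φ : R →ₗ[F] R) : Prop where
  invol : ∀ x, φ (φ x) = x
  graded : ∀ (p : ZMod 2) (x : R), x ∈ S p → φ x ∈ S p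
  anti : ∀ {p q : ZMod 2} {x y : R}, x ∈ S p → y ∈ S q →
    φ (x * y) = superSign F p q • (φ y * φ x)

/-- A grading is fine if every nonzero homogeneous component is one-dimensional. -/
def IsFineGrading (F : Type*) [Field F] {G R : Type*} [Group G] [Ring R] [Algebra F R]
    (A : G → Submodule F R) : Prop :=
  ∀ g, A g ≠ ⊥ → Module.finrank F (A g) = 1

/-- Compatibility of a `G`-grading with a superalgebra structure:
`R_g = (R_g ∩ R₀) ⊕ (R_g ∩ R₁)`. -/
def SuperCompatible (F : Type*) [Field F] {G R : Type*} [Group G] [Ring R] [Algebra F R]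
    (A : G → Submodule F R) (S : ZMod 2 → Submodule F R) : Prop :=
  ∀ g, A g = (A g ⊓ S 0) ⊔ (A g ⊓ S 1)

/-- The homogeneous component of degree `g` of the elementary grading on a matrix
algebra determined by the tuple `t`: it is spanned by the matrix units `E a b` with
`(t a)⁻¹ * t b = g`. -/
def elemGrading (F : Type*) [Field F] {G : Type*} [Group G] {ι : Type*} (t : ι → G) (g : G) :
    Submodule F (Matrix ι ι F) where
  carrier := {X | ∀ a b, (t a)⁻¹ * t b ≠ g → X a b = 0}
  add_mem' := by
    intro X Y hX hY a b h
    simp only [Matrix.add_apply, hX a b h, hY a b h, add_zero]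
  zero_mem' := by intro a b h; simp
  smul_mem' := by
    intro c X hX a b h
    simp only [Matrix.smul_apply, hX a b h, smul_zero]

/-- The `ℤ₂`-components of the matrix superalgebra structure determined by a parity
function `π` on the indices: the component of parity `p` consists of the matrices
supported on positions `(a,b)` with `π a + π b = p`. -/
def parSuper (F : Type*) [Field F] {ι : Type*} (π : ι → ZMod 2) (p : ZMod 2) :
    Submodule F (Matrix ι ι F) where
  carrier := {X | ∀ a b, π a + π b ≠ p → X a b = 0}
  add_mem' := by
    intro X Y hX hY a b h
    simp only [Matrix.add_apply, hX a b h, hY a b h, add_zero]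
  zero_mem' := by intro a b h; simp
  smul_mem' := by
    intro c X hX a b h
    simp only [Matrix.smul_apply, hX a b h, smul_zero]

/-- The parity function of the matrix superalgebra `M_{n,m}(F)`, with indices
`Fin n ⊕ Fin m`: the first block is even, the second odd. -/
def matPar {n m : ℕ} : Fin n ⊕ Fin m → ZMod 2 := Sum.elim (fun _ => 0) (fun _ => 1)

/-- The superalgebra structure of the matrix superalgebra `M_{n,m}(F)`: the even part
consists of block-diagonal, the odd part of block-antidiagonal matrices. -/
def matSuper (F : Type*) [Field F] (n m : ℕ) (p : ZMod 2) :
    Submodule F (Matrix (Fin n ⊕ Fin m) (Fin n ⊕ Fin m) F) :=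
  parSuper F matPar p

/-- The `ℤ₂`-components of the superalgebra structure of type `Q`, determined by the
index involution `sw` (which exchanges the two copies inside each block):
the even part consists of `sw`-invariant matrices, the odd part of `sw`-anti-invariant ones. -/
def swSuper (F : Type*) [Field F] {ι : Type*} (sw : ι → ι) (p : ZMod 2) :
    Submodule F (Matrix ι ι F) where
  carrier := {X | ∀ a b, X (sw a) (sw b) = (if p = 0 then 1 else -1) * X a b}
  add_mem' := by
    intro X Y hX hY a b
    simp only [Matrix.add_apply, hX a b, hY a b, mul_add]
  zero_mem' := by intro a b; simp
  smul_mem' := by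
    intro c X hX a b
    simp only [Matrix.smul_apply, hX a b, smul_eq_mul]
    ring

/-- The supertranspose `X ↦ X^τ = [[Aᵗ, Cᵗ], [-Bᵗ, Dᵗ]]`, for a general parity
function `π` on the matrix indices. -/
def tauL (F : Type*) [Field F] {ι : Type*} (π : ι → ZMod 2) :
    Matrix ι ι F →ₗ[F] Matrix ι ι F where
  toFun X := fun a b => (if π a = 1 ∧ π b = 0 then (-1 : F) else 1) * X b a
  map_add' X Y := by funext a b; exact mul_add _ (X b a) (Y b a)
  map_smul' c X := by
    funext a b
    exact mul_left_comm _ c (X b a)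

/-!
The parity map of a superalgebra structure on `M_n(F)`, which is the identity on the even part and
`-1` on the odd part, is an automorphism of order at most two, hence conjugation by a matrix `T`
with `T² = 1`. Compatibility says that conjugation by `T` respects the elementary grading, which
forces `T` to shift the degrees of the standard basis vectors by a fixed `h` with `h² = 1`.

If `h = 1`, then `Fⁿ` has a basis of homogeneous eigenvectors of `T`, and in it the superalgebra has
type `A`. If `h ≠ 1`, choose one degree from each pair `{x, h x}`: the standard basis vectors of the
chosen degrees together with their images under `T` form a homogeneous basis, in which `T` is the
permutation matrix exchanging the two halves, and the superalgebra has type `Q`.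
-/

/-- The sign `(-1)^p` in `F` of a parity `p`. -/
def paritySign (F : Type*) [Field F] (p : ZMod 2) : F := if p = 0 then 1 else -1

theorem parity_eq_zero_or_one : ∀ p : ZMod 2, p = 0 ∨ p = 1 := by decide

section ParitySign

variable {F : Type*} [Field F]

@[simp]
theorem paritySign_zero : paritySign F 0 = 1 := rfl

@[simp]
theorem paritySign_one : paritySign F 1 = -1 := rfl

theorem paritySign_add (p q : ZMod 2) :
    paritySign F (p + q) = paritySign F p * paritySign F q := by
  obtain rfl | rfl := parity_eq_zero_or_one p <;>
    obtain rfl | rfl := parity_eq_zero_or_one q <;> simp [CharTwo.add_self_eq_zero]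

theorem paritySign_mul_self (p : ZMod 2) : paritySign F p * paritySign F p = 1 := by
  rw [← paritySign_add, CharTwo.add_self_eq_zero, paritySign_zero]

theorem paritySign_injective (h2 : (2 : F) ≠ 0) : Function.Injective (paritySign F) := by
  have h : (1 : F) ≠ -1 := fun h ↦ h2 (by linear_combination h)
  intro p q hpq
  obtain rfl | rfl := parity_eq_zero_or_one p <;>
    obtain rfl | rfl := parity_eq_zero_or_one q <;> simp_all [eq_comm]

end ParitySign

namespace IsSuperGrading

variable {F R : Type*} [Field F] [Ring R] [Algebra F R] {S : ZMod 2 → Submodule F R}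

theorem isCompl (hS : IsSuperGrading F S) : IsCompl (S 0) (S 1) :=
  hS.internal.isCompl zero_ne_one
    (by ext p; simpa [eq_comm] using parity_eq_zero_or_one p)

theorem exists_add (hS : IsSuperGrading F S) (x : R) :
    ∃ x₀ ∈ S 0, ∃ x₁ ∈ S 1, x₀ + x₁ = x :=
  Submodule.mem_sup.1 (hS.isCompl.sup_eq_top ▸ Submodule.mem_top)

/-- The parity map `x₀ + x₁ ↦ x₀ - x₁` of a superalgebra. -/
noncomputable def parityMap (hS : IsSuperGrading F S) : R →ₗ[F] R :=
  LinearMap.ofIsCompl hS.isCompl (S 0).subtype (-(S 1).subtype)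

theorem parityMap_apply (hS : IsSuperGrading F S) {p : ZMod 2} {x : R} (hx : x ∈ S p) :
    hS.parityMap x = paritySign F p • x := by
  obtain rfl | rfl := parity_eq_zero_or_one p
  · rw [paritySign_zero, one_smul]
    exact LinearMap.ofIsCompl_apply_left hS.isCompl ⟨x, hx⟩
  · rw [paritySign_one, neg_one_smul]
    exact LinearMap.ofIsCompl_apply_right hS.isCompl ⟨x, hx⟩

theorem parityMap_parityMap (hS : IsSuperGrading F S) (x : R) :
    hS.parityMap (hS.parityMap x) = x := by
  obtain ⟨x₀, hx₀, x₁, hx₁, rfl⟩ := hS.exists_add x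
  simp [hS.parityMap_apply hx₀, hS.parityMap_apply hx₁]

theorem parityMap_mul (hS : IsSuperGrading F S) (x y : R) :
    hS.parityMap (x * y) = hS.parityMap x * hS.parityMap y := by
  have homogeneous {p q : ZMod 2} {x y : R} (hx : x ∈ S p) (hy : y ∈ S q) :
      hS.parityMap (x * y) = hS.parityMap x * hS.parityMap y := by
    rw [hS.parityMap_apply (hS.mul_mem hx hy), hS.parityMap_apply hx, hS.parityMap_apply hy,
      smul_mul_smul_comm, paritySign_add]
  obtain ⟨x₀, hx₀, x₁, hx₁, rfl⟩ := hS.exists_add x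
  obtain ⟨y₀, hy₀, y₁, hy₁, rfl⟩ := hS.exists_add y
  simp only [add_mul, mul_add, map_add, homogeneous hx₀ hy₀, homogeneous hx₀ hy₁,
    homogeneous hx₁ hy₀, homogeneous hx₁ hy₁]

theorem parityMap_one (hS : IsSuperGrading F S) : hS.parityMap 1 = 1 := by
  simpa [hS.parityMap_parityMap, eq_comm] using hS.parityMap_mul (hS.parityMap 1) 1

theorem mem_iff_parityMap (hS : IsSuperGrading F S) (h2 : (2 : F) ≠ 0) {p : ZMod 2} {x : R} :
    x ∈ S p ↔ hS.parityMap x = paritySign F p • x := by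
  refine ⟨hS.parityMap_apply, fun h ↦ ?_⟩
  obtain ⟨x₀, hx₀, x₁, hx₁, rfl⟩ := hS.exists_add x
  rw [map_add, hS.parityMap_apply hx₀, hS.parityMap_apply hx₁] at h
  obtain rfl | rfl := parity_eq_zero_or_one p <;>
    simp only [paritySign_zero, paritySign_one, one_smul, neg_one_smul] at h
  · have : (2 : F) • x₁ = 0 :=
      (two_smul F x₁).trans (neg_eq_iff_add_eq_zero.1 (add_left_cancel h))
    simpa [(smul_eq_zero_iff_right h2).1 this] using hx₀
  · have : (2 : F) • x₀ = 0 :=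
      (two_smul F x₀).trans
        (eq_neg_iff_add_eq_zero.1 (add_right_cancel (h.trans (neg_add x₀ x₁))))
    simpa [(smul_eq_zero_iff_right h2).1 this] using hx₁

/-- The parity automorphism `x₀ + x₁ ↦ x₀ - x₁` of a superalgebra. -/
noncomputable def parityAut (hS : IsSuperGrading F S) : R ≃ₐ[F] R :=
  AlgEquiv.ofLinearEquiv (LinearEquiv.ofInvolutive hS.parityMap hS.parityMap_parityMap)
    hS.parityMap_one hS.parityMap_mul

end IsSuperGrading

section SuperOfInvolution

variable {F ι : Type*} [Field F] [Fintype ι] [DecidableEq ι]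

/-- The parity `p` component of the superalgebra structure on matrices whose parity automorphism
is `X ↦ T * X * T`, where `T` is an involution. -/
def superOfInvolution (T : Matrix ι ι F) (p : ZMod 2) : Submodule F (Matrix ι ι F) :=
  Module.End.eigenspace (LinearMap.mulLeftRight F (T, T)) (paritySign F p)

theorem mem_superOfInvolution_iff {T X : Matrix ι ι F} {p : ZMod 2} :
    X ∈ superOfInvolution T p ↔ T * X * T = paritySign F p • X := by
  rw [superOfInvolution, Module.End.mem_eigenspace_iff, LinearMap.mulLeftRight_apply]

theorem parSuper_eq_superOfInvolution (h2 : (2 : F) ≠ 0) (π : ι → ZMod 2) :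
    parSuper F π = superOfInvolution (.diagonal fun a ↦ paritySign F (π a)) := by
  ext p X
  rw [mem_superOfInvolution_iff]
  simp only [← Matrix.ext_iff, Matrix.mul_diagonal, Matrix.diagonal_mul, Matrix.smul_apply,
    smul_eq_mul, mul_right_comm _ (X _ _), ← paritySign_add, mul_eq_mul_right_iff,
    (paritySign_injective h2).eq_iff]
  exact forall₂_congr fun a b ↦ or_iff_not_imp_left.symm

theorem swSuper_eq_superOfInvolution {sw : ι → ι} (hsw : Function.Involutive sw) :
    swSuper F sw = superOfInvolution (hsw.toPerm.permMatrix F) := by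
  ext p X
  rw [mem_superOfInvolution_iff, Equiv.Perm.permMatrix, PEquiv.toMatrix_toPEquiv_mul,
    PEquiv.mul_toMatrix_toPEquiv, Function.Involutive.toPerm_symm, ← Matrix.ext_iff]
  rfl

end SuperOfInvolution

section InnerInvolution

theorem exists_mul_self_eq_one_of_involutive_conj {F R : Type*} [Field F] [Ring R] [Algebra F R]
    [Algebra.IsCentral F R] (hF : ∀ c : F, IsSquare c) (u : Rˣ)
    (hu : ∀ x : R, u * (u * x * ↑u⁻¹) * ↑u⁻¹ = x) :
    ∃ T : R, T * T = 1 ∧ ∀ x, u * x * ↑u⁻¹ = T * x * T := by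
  nontriviality R
  have central : (u * u : R) ∈ Subalgebra.center F R := Subalgebra.mem_center_iff.2 fun x ↦ by
    nth_rw 1 [← hu x]
    simp [mul_assoc]
  obtain ⟨c, hc⟩ := (Algebra.IsCentral.mem_center_iff F).1 central
  obtain ⟨s, rfl⟩ := hF c
  have hs : s ≠ 0 := by
    rintro rfl
    simp at hc
  have hinv : (↑u⁻¹ : R) = (s⁻¹ * s⁻¹) • (u : R) := by
    refine Units.inv_eq_of_mul_eq_one_right ?_
    have hss : s⁻¹ * s⁻¹ * (s * s) = 1 := by field_simp
    rw [mul_smul_comm, hc, Algebra.algebraMap_eq_smul_one, smul_smul, hss, one_smul]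
  refine ⟨s⁻¹ • (u : R), ?_, fun x ↦ ?_⟩
  · rw [smul_mul_smul_comm, ← smul_mul_assoc, ← hinv, u.inv_mul]
  · rw [hinv, smul_mul_assoc, smul_mul_smul_comm, mul_smul_comm]

variable {F ι : Type*} [Field F] [Fintype ι] [DecidableEq ι]

theorem exists_conj_of_matrix_algEquiv (φ : Matrix ι ι F ≃ₐ[F] Matrix ι ι F) :
    ∃ U : (Matrix ι ι F)ˣ, ∀ X, φ X = U.1 * X * U⁻¹.1 := by
  let E := Matrix.toLinAlgEquiv' (R := F) (n := ι)
  obtain ⟨U, hU⟩ := Module.End.mulSemiringActionToAlgEquiv_conjAct_surjective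
    ((E.symm.trans φ).trans E)
  refine ⟨Units.map E.symm.toRingHom.toMonoidHom (ConjAct.ofConjAct U), fun X ↦ E.injective ?_⟩
  simpa [MulSemiringAction.toAlgEquiv_apply, ConjAct.units_smul_def, E.symm_apply_apply,
    Units.coe_map_inv] using (DFunLike.congr_fun hU (E X)).symm

theorem IsSuperGrading.exists_eq_superOfInvolution (h2 : (2 : F) ≠ 0) (hF : ∀ c : F, IsSquare c)
    {S : ZMod 2 → Submodule F (Matrix ι ι F)} (hS : IsSuperGrading F S) :
    ∃ T : Matrix ι ι F, T * T = 1 ∧ S = superOfInvolution T := by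
  obtain ⟨U, hU⟩ := exists_conj_of_matrix_algEquiv hS.parityAut
  obtain ⟨T, hT, hUT⟩ := exists_mul_self_eq_one_of_involutive_conj hF U fun X ↦ by
    rw [← hU, ← hU]
    exact hS.parityMap_parityMap X
  refine ⟨T, hT, ?_⟩
  ext p X
  rw [mem_superOfInvolution_iff, hS.mem_iff_parityMap h2, ← hUT, ← hU]
  rfl

end InnerInvolution

theorem mul_single_one_mul_apply {ι κ ν μ R : Type*} [Fintype ι] [Fintype κ] [DecidableEq ι]
    [DecidableEq κ] [Semiring R] (M : Matrix ν ι R) (N : Matrix κ μ R) (a : ι) (b : κ)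
    (c : ν) (d : μ) : (M * Matrix.single a b (1 : R) * N) c d = M c a * N b d := by
  simp [Matrix.mul_apply, Matrix.single_apply, ite_and]

section IsDegreePreserving

variable {ι κ ν γ δ R : Type*}

/-- With degrees `t` on the rows and `s` on the columns, `M` has nonzero entries only where the
degrees of the row and of the column agree: `M` is a homogeneous map of trivial degree between
graded free modules. -/
def IsDegreePreserving [Zero R] (t : ι → γ) (s : κ → γ) (M : Matrix ι κ R) : Prop :=
  ∀ a x, M a x ≠ 0 → t a = s x

namespace IsDegreePreserving

theorem comp [Zero R] {t : ι → γ} {s : κ → γ} {M : Matrix ι κ R}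
    (hM : IsDegreePreserving t s M) (f : γ → δ) : IsDegreePreserving (f ∘ t) (f ∘ s) M :=
  fun a x h ↦ congrArg f (hM a x h)

theorem mul [Fintype κ] [NonUnitalNonAssocSemiring R] {t : ι → γ} {s : κ → γ} {u : ν → γ}
    {M : Matrix ι κ R} {N : Matrix κ ν R} (hM : IsDegreePreserving t s M)
    (hN : IsDegreePreserving s u N) : IsDegreePreserving t u (M * N) := by
  intro a y h
  obtain ⟨x, -, hx⟩ := Finset.exists_ne_zero_of_sum_ne_zero h
  exact (hM a x (left_ne_zero_of_mul hx)).trans (hN x y (right_ne_zero_of_mul hx))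

theorem of_inverse [Fintype ι] [Fintype κ] [DecidableEq ι] [DecidableEq κ] [Semiring R]
    {t : ι → γ} {s : κ → γ} {P : Matrix ι κ R} {Q : Matrix κ ι R}
    (hP : IsDegreePreserving t s P) (hPQ : P * Q = 1) (hQP : Q * P = 1) :
    IsDegreePreserving s t Q := by
  classical
  -- Deleting the entries of `Q` that violate the degree condition leaves a left inverse of `P`.
  let Q' : Matrix κ ι R := .of fun x a ↦ if s x = t a then Q x a else 0
  have left_inv : Q' * P = 1 := by
    ext x y
    obtain hxy | hxy := eq_or_ne (s x) (s y)
    · rw [← hQP]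
      refine Finset.sum_congr rfl fun a _ ↦ ?_
      obtain ha | ha := eq_or_ne (P a y) 0
      · simp [ha]
      · simp [Q', hxy, hP a y ha]
    · rw [Matrix.one_apply_ne (ne_of_apply_ne s hxy)]
      refine Finset.sum_eq_zero fun a _ ↦ ?_
      obtain ha | ha := eq_or_ne (P a y) 0
      · simp [ha]
      · simp [Q', hxy, hP a y ha]
  have hQ : Q' = Q := by
    rw [← Matrix.mul_one Q', ← hPQ, ← Matrix.mul_assoc, left_inv, Matrix.one_mul]
  intro x a h
  rw [← hQ] at h
  by_contra hne
  exact h (if_neg hne)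

end IsDegreePreserving

end IsDegreePreserving

section ElementaryGrading

variable {ι γ F : Type*} [Group γ] [Field F]

theorem mem_elemGrading_iff {t : ι → γ} {g : γ} {X : Matrix ι ι F} :
    X ∈ elemGrading F t g ↔ IsDegreePreserving (fun a ↦ t a * g) t X := by
  refine forall₂_congr fun a b ↦ ?_
  rw [not_imp_comm, inv_mul_eq_iff_eq_mul, eq_comm (a := t b)]

theorem single_mem_elemGrading [DecidableEq ι] (t : ι → γ) (a b : ι) :
    Matrix.single a b (1 : F) ∈ elemGrading F t ((t a)⁻¹ * t b) := by
  intro c d h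
  refine Matrix.single_apply_of_ne _ _ _ _ _ ?_
  rintro ⟨rfl, rfl⟩
  exact h rfl

variable [Fintype ι] [DecidableEq ι]

theorem mul_mul_mem_elemGrading_of_superCompatible {t : ι → γ} {T : Matrix ι ι F}
    (hT : SuperCompatible F (elemGrading F t) (superOfInvolution T)) {g : γ} {X : Matrix ι ι F}
    (hX : X ∈ elemGrading F t g) : T * X * T ∈ elemGrading F t g := by
  rw [hT g] at hX
  obtain ⟨X₀, ⟨hg₀, h₀⟩, X₁, ⟨hg₁, h₁⟩, rfl⟩ := Submodule.mem_sup.1 hX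
  rw [mul_add, add_mul, mem_superOfInvolution_iff.1 h₀, mem_superOfInvolution_iff.1 h₁]
  exact add_mem (Submodule.smul_mem _ _ hg₀) (Submodule.smul_mem _ _ hg₁)

theorem exists_isDegreePreserving_of_superCompatible {t : ι → γ} {T : Matrix ι ι F}
    (hT : SuperCompatible F (elemGrading F t) (superOfInvolution T)) :
    ∃ h : γ, h ^ 2 = 1 ∧ IsDegreePreserving t (fun b ↦ h * t b) T := by
  have degree_eq {a b c d : ι} (hca : T c a ≠ 0) (hbd : T b d ≠ 0) :
      t d * (t b)⁻¹ = t c * (t a)⁻¹ := by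
    by_contra hne
    have hzero := mul_mul_mem_elemGrading_of_superCompatible hT (single_mem_elemGrading t a b) c d
      fun h ↦ hne (by rw [mul_inv_eq_iff_eq_mul, mul_assoc, ← h, mul_inv_cancel_left])
    rw [mul_single_one_mul_apply] at hzero
    exact mul_ne_zero hca hbd hzero
  by_cases hne : ∃ a b, T a b ≠ 0
  · obtain ⟨a, b, hab⟩ := hne
    refine ⟨t b * (t a)⁻¹, ?_, fun c d hcd ↦ ?_⟩
    · rw [pow_two, mul_eq_one_iff_eq_inv, mul_inv_rev, inv_inv]
      exact degree_eq hab hab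
    · exact mul_inv_eq_iff_eq_mul.1 (degree_eq hcd hab).symm
  · push Not at hne
    exact ⟨1, one_pow 2, fun a b h ↦ (h (hne a b)).elim⟩

end ElementaryGrading

section ChangeOfBasis

open Matrix

variable {F ι κ γ : Type*} [Field F] [Fintype ι] [DecidableEq ι] [Fintype κ] [DecidableEq κ]

/-- The isomorphism of matrix algebras that rewrites the endomorphisms of `ι → F` in the
basis `b`. -/
noncomputable def changeOfBasis (b : Module.Basis κ F (ι → F)) :
    Matrix ι ι F ≃ₐ[F] Matrix κ κ F :=
  Matrix.toLinAlgEquiv'.trans (LinearMap.toMatrixAlgEquiv b)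

variable {b : Module.Basis κ F (ι → F)}

theorem changeOfBasis_apply (X : Matrix ι ι F) :
    changeOfBasis b X =
      b.toMatrix (Pi.basisFun F ι) * X * (Pi.basisFun F ι).toMatrix b := by
  have h := basis_toMatrix_mul_linearMap_toMatrix_mul_basis_toMatrix b (Pi.basisFun F ι) b
    (Pi.basisFun F ι) (Matrix.toLin' X)
  rw [LinearMap.toMatrix_eq_toMatrix', LinearMap.toMatrix'_toLin'] at h
  exact h.symm

theorem changeOfBasis_eq_of_mulVec {X : Matrix ι ι F} {Y : Matrix κ κ F}
    (h : ∀ x, X *ᵥ b x = ∑ y, Y y x • b y) : changeOfBasis b X = Y := by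
  refine (Matrix.toLinAlgEquiv b).injective (b.ext fun x ↦ ?_)
  simp [changeOfBasis, h]

theorem changeOfBasis_eq_diagonal {X : Matrix ι ι F} {d : κ → F}
    (h : ∀ x, X *ᵥ b x = d x • b x) : changeOfBasis b X = diagonal d :=
  changeOfBasis_eq_of_mulVec fun x ↦ by simp [h, diagonal_apply]

theorem changeOfBasis_eq_permMatrix {X : Matrix ι ι F} {σ : Equiv.Perm κ}
    (h : ∀ x, X *ᵥ b x = b (σ.symm x)) : changeOfBasis b X = σ.permMatrix F :=
  changeOfBasis_eq_of_mulVec fun x ↦ by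
    simp [h, Equiv.Perm.permMatrix, PEquiv.toMatrix_apply, ← Equiv.eq_symm_apply]

theorem map_superOfInvolution (T : Matrix ι ι F) (p : ZMod 2) :
    (superOfInvolution T p).map (changeOfBasis b).toLinearMap =
      superOfInvolution (changeOfBasis b T) p := by
  rw [← Submodule.map_comap_eq_of_surjective (f := (changeOfBasis b).toLinearMap)
    (changeOfBasis b).surjective (superOfInvolution (changeOfBasis b T) p)]
  congr 1
  ext X
  simp [mem_superOfInvolution_iff, ← map_mul, ← map_smul]

variable [Group γ] {t : ι → γ} {s : κ → γ}

theorem map_elemGrading (hb : ∀ x a, b x a ≠ 0 → t a = s x) (g : γ) :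
    (elemGrading F t g).map (changeOfBasis b).toLinearMap = elemGrading F s g := by
  have hPQ := Module.Basis.toMatrix_mul_toMatrix_flip (Pi.basisFun F ι) b
  have hQP := Module.Basis.toMatrix_mul_toMatrix_flip b (Pi.basisFun F ι)
  have hP : IsDegreePreserving t s ((Pi.basisFun F ι).toMatrix b) := fun a x ↦ hb x a
  have hQ := hP.of_inverse hPQ hQP
  rw [← Submodule.map_comap_eq_of_surjective (f := (changeOfBasis b).toLinearMap)
    (changeOfBasis b).surjective (elemGrading F s g)]
  congr 1
  ext X
  rw [Submodule.mem_comap, AlgEquiv.toLinearMap_apply, changeOfBasis_apply, mem_elemGrading_iff,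
    mem_elemGrading_iff]
  refine ⟨fun hX ↦ ((hQ.comp (· * g)).mul hX).mul hP, fun hX ↦ ?_⟩
  have h := ((hP.comp (· * g)).mul hX).mul hQ
  rwa [← Matrix.mul_assoc, ← Matrix.mul_assoc, hPQ, Matrix.one_mul, Matrix.mul_assoc, hPQ,
    Matrix.mul_one] at h

end ChangeOfBasis

section Enumeration

theorem exists_injective_fin_comp_eq {α γ : Type*} [Finite α] (l : α → γ) :
    ∃ (r : ℕ) (g : Fin r → γ) (c : α → Fin r), g.Injective ∧ ∀ a, g (c a) = l a := by
  obtain ⟨r, ⟨e⟩⟩ := Finite.exists_equiv_fin (Set.range l)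
  exact ⟨r, fun i ↦ e.symm i, fun a ↦ e (Set.rangeFactorization l a),
    Subtype.val_injective.comp e.symm.injective, fun a ↦ by simp⟩

theorem exists_equiv_sigma_fin {α γ : Type*} [Finite α] (l : α → γ) :
    ∃ (r : ℕ) (k : Fin r → ℕ) (g : Fin r → γ) (E : α ≃ Σ i, Fin (k i)),
      g.Injective ∧ ∀ x, l (E.symm x) = g x.1 := by
  obtain ⟨r, g, c, hg, hc⟩ := exists_injective_fin_comp_eq l
  choose k e using fun i ↦ Finite.exists_equiv_fin {a // c a = i}
  refine ⟨r, k, g, (Equiv.sigmaFiberEquiv c).symm.trans (.sigmaCongrRight fun i ↦ (e i).some),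
    hg, fun x ↦ ?_⟩
  exact (hc _).symm.trans (congrArg g ((e x.1).some.symm x.2).2)

theorem exists_equiv_fin_sum_fin {α : Type*} [Finite α] (π : α → ZMod 2) :
    ∃ (p q : ℕ) (E : α ≃ Fin p ⊕ Fin q), ∀ x, π (E.symm x) = matPar x := by
  obtain ⟨p, ⟨e⟩⟩ := Finite.exists_equiv_fin {a // π a = 0}
  obtain ⟨q, ⟨f⟩⟩ := Finite.exists_equiv_fin {a // ¬ π a = 0}
  refine ⟨p, q, (Equiv.sumCompl fun a ↦ π a = 0).symm.trans (e.sumCongr f), ?_⟩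
  rintro (x | x)
  · exact (e.symm x).2
  · exact (parity_eq_zero_or_one _).resolve_left (f.symm x).2

theorem exists_equiv_sigma_fin_sum_fin {α γ : Type*} [Finite α] (l : α → γ) (π : α → ZMod 2) :
    ∃ (r : ℕ) (p q : Fin r → ℕ) (g : Fin r → γ) (E : α ≃ Σ i, Fin (p i) ⊕ Fin (q i)),
      g.Injective ∧ (∀ x, l (E.symm x) = g x.1) ∧ ∀ x, π (E.symm x) = matPar x.2 := by
  obtain ⟨r, g, c, hg, hc⟩ := exists_injective_fin_comp_eq l
  choose p q e he using fun i ↦ exists_equiv_fin_sum_fin fun a : {a // c a = i} ↦ π a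
  refine ⟨r, p, q, g, (Equiv.sigmaFiberEquiv c).symm.trans (.sigmaCongrRight e), hg,
    fun x ↦ ?_, fun x ↦ he x.1 x.2⟩
  exact (hc _).symm.trans (congrArg g ((e x.1).symm x.2).2)

end Enumeration

section Types

open Matrix

variable (F : Type*) {G R : Type*} [Field F] [Group G] [Ring R] [Algebra F R]

/-- The algebra `R`, with `G`-homogeneous components `A` and parity components `S`, is isomorphic
as a `G`-graded superalgebra to some `A(θ; p̄)`. -/
def IsTypeA (A : G → Submodule F R) (S : ZMod 2 → Submodule F R) : Prop :=
  ∃ (r : ℕ) (p q : Fin r → ℕ) (g : Fin r → G), g.Injective ∧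
    ∃ e : R ≃ₐ[F] Matrix (Σ i, Fin (p i) ⊕ Fin (q i)) (Σ i, Fin (p i) ⊕ Fin (q i)) F,
      (∀ γ, (A γ).map e.toLinearMap = elemGrading F (fun x ↦ g x.1) γ) ∧
      ∀ π, (S π).map e.toLinearMap = parSuper F (fun x ↦ matPar x.2) π

/-- The algebra `R`, with `G`-homogeneous components `A` and parity components `S`, is isomorphic
as a `G`-graded superalgebra to some `Q(θ; h)`. The second copy of a block carries `h * g i` rather
than `g i * h`: an elementary grading is invariant under left, not right, translation of `θ`, so
this is the order that makes sense for noncommutative `G`. -/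
def IsTypeQ (A : G → Submodule F R) (S : ZMod 2 → Submodule F R) : Prop :=
  ∃ (r : ℕ) (k : Fin r → ℕ) (g : Fin r → G) (h : G), g.Injective ∧ h ≠ 1 ∧ h ^ 2 = 1 ∧
    ∃ e : R ≃ₐ[F] Matrix (Σ i, Fin (k i) ⊕ Fin (k i)) (Σ i, Fin (k i) ⊕ Fin (k i)) F,
      (∀ γ, (A γ).map e.toLinearMap =
        elemGrading F (fun x ↦ Sum.elim (fun _ ↦ g x.1) (fun _ ↦ h * g x.1) x.2) γ) ∧
      ∀ π, (S π).map e.toLinearMap = swSuper F (fun x ↦ ⟨x.1, x.2.swap⟩) π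

variable {F} {ι κ : Type*} [Fintype ι] [DecidableEq ι] [Finite κ]
  {t : ι → G} {T : Matrix ι ι F}

theorem isTypeA_of_basis (h2 : (2 : F) ≠ 0) (b : Module.Basis κ F (ι → F)) {l : κ → G}
    {π : κ → ZMod 2} (hb : ∀ x a, b x a ≠ 0 → t a = l x)
    (hT : ∀ x, T *ᵥ b x = paritySign F (π x) • b x) :
    IsTypeA F (elemGrading F t) (superOfInvolution T) := by
  obtain ⟨r, p, q, g, E, hg, hl, hπ⟩ := exists_equiv_sigma_fin_sum_fin l π
  refine ⟨r, p, q, g, hg, changeOfBasis (b.reindex E), map_elemGrading fun x a h ↦ ?_, fun p ↦ ?_⟩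
  · rw [b.reindex_apply] at h
    rw [hb _ _ h, hl]
  · rw [map_superOfInvolution, parSuper_eq_superOfInvolution h2]
    congr 1
    exact changeOfBasis_eq_diagonal fun x ↦ by rw [b.reindex_apply, hT, hπ]

theorem isTypeQ_of_basis {h : G} (hne : h ≠ 1) (hh : h ^ 2 = 1)
    (b : Module.Basis (κ ⊕ κ) F (ι → F)) {l : κ → G}
    (hb : ∀ x a, b x a ≠ 0 → t a = Sum.elim l (fun y ↦ h * l y) x)
    (hT : ∀ x, T *ᵥ b x = b x.swap) :
    IsTypeQ F (elemGrading F t) (superOfInvolution T) := by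
  obtain ⟨r, k, g, E, hg, hl⟩ := exists_equiv_sigma_fin l
  let E' := (E.sumCongr E).trans (Equiv.sigmaSumDistrib _ _).symm
  have hswap (x) : (E'.symm x).swap = E'.symm ⟨x.1, x.2.swap⟩ := by
    obtain ⟨i, x | x⟩ := x <;> rfl
  refine ⟨r, k, g, h, hg, hne, hh, changeOfBasis (b.reindex E'), map_elemGrading fun x a hx ↦ ?_,
    fun p ↦ ?_⟩
  · rw [b.reindex_apply] at hx
    rw [hb _ _ hx]
    obtain ⟨i, x | x⟩ := x
    · exact hl ⟨i, x⟩
    · exact congrArg (h * ·) (hl ⟨i, x⟩)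
  · rw [map_superOfInvolution, swSuper_eq_superOfInvolution fun x ↦ by simp]
    congr 1
    refine changeOfBasis_eq_permMatrix fun x ↦ ?_
    rw [b.reindex_apply, hT, hswap, b.reindex_apply]
    rfl

end Types

section HomogeneousEigenbasis

open Matrix

theorem exists_basis_mem_of_span_eq_top {ι K V : Type*} [Field K] [AddCommGroup V] [Module K V]
    (b₀ : Module.Basis ι K V) {s : Set V} (hs : Submodule.span K s = ⊤) :
    ∃ b : Module.Basis ι K V, ∀ i, b i ∈ s := by
  let b := Module.Basis.ofSpan hs.ge
  refine ⟨b.reindex (b.indexEquiv b₀), fun i ↦ ?_⟩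
  rw [b.reindex_apply]
  exact Module.Basis.ofSpan_subset hs.ge (Set.mem_range_self _)

theorem mulVec_col_of_mul_self_eq_one {ι R : Type*} [Fintype ι] [DecidableEq ι] [Semiring R]
    {T : Matrix ι ι R} (hT : T * T = 1) (a : ι) : T *ᵥ T.col a = Pi.single a 1 := by
  rw [← mulVec_single_one, mulVec_mulVec, hT, one_mulVec]

variable {F ι γ : Type*} [Field F] [Fintype ι] [DecidableEq ι] {t : ι → γ} {T : Matrix ι ι F}

-- `T` acts by `(-1)^p` on the image of `1 + (-1)^p T`.
theorem mulVec_single_add_smul_col (hT : T * T = 1) (p : ZMod 2) (a : ι) :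
    T *ᵥ (Pi.single a 1 + paritySign F p • T.col a) =
      paritySign F p • (Pi.single a 1 + paritySign F p • T.col a) := by
  rw [mulVec_add, mulVec_smul, mulVec_single_one, mulVec_col_of_mul_self_eq_one hT, smul_add,
    smul_smul, paritySign_mul_self, one_smul, add_comm]

theorem exists_basis_homogeneous_eigenvectors (h2 : (2 : F) ≠ 0) (hT : T * T = 1)
    (hdeg : IsDegreePreserving t t T) :
    ∃ (b : Module.Basis ι F (ι → F)) (l : ι → γ) (π : ι → ZMod 2),
      (∀ x a, b x a ≠ 0 → t a = l x) ∧ ∀ x, T *ᵥ b x = paritySign F (π x) • b x := by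
  let w (p : ZMod 2) (a : ι) : ι → F := Pi.single a 1 + paritySign F p • T.col a
  have homogeneous (p a c) (h : w p a c ≠ 0) : t c = t a := by
    by_contra hne
    have hca : c ≠ a := ne_of_apply_ne t hne
    have hTca : T c a = 0 := not_imp_comm.1 (hdeg c a) hne
    simp [w, hca, hTca] at h
  have single_eq (a) : Pi.single a 1 = (2 : F)⁻¹ • (w 0 a + w 1 a) := by
    rw [eq_inv_smul_iff₀ h2]
    simp only [w, paritySign_zero, paritySign_one]
    module
  have span_eq_top : Submodule.span F (Set.range (Function.uncurry w)) = ⊤ := by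
    refine top_le_iff.1 ((Pi.basisFun F ι).span_eq.ge.trans (Submodule.span_le.2 ?_))
    rintro _ ⟨a, rfl⟩
    rw [Pi.basisFun_apply, single_eq]
    exact Submodule.smul_mem _ _ (add_mem (Submodule.subset_span ⟨(0, a), rfl⟩)
      (Submodule.subset_span ⟨(1, a), rfl⟩))
  obtain ⟨b, hb⟩ := exists_basis_mem_of_span_eq_top (Pi.basisFun F ι) span_eq_top
  choose x hx using hb
  refine ⟨b, fun i ↦ t (x i).2, fun i ↦ (x i).1, fun i a ↦ ?_, fun i ↦ ?_⟩
  · rw [← hx]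
    exact homogeneous _ _ a
  · rw [← hx]
    exact mulVec_single_add_smul_col hT _ _

end HomogeneousEigenbasis

section SwappedBasis

open Matrix

theorem exists_set_apply_mem_iff_notMem {α : Type*} {s : α → α} (hs : s.Involutive)
    (hne : ∀ x, s x ≠ x) : ∃ X : Set α, ∀ x, s x ∈ X ↔ x ∉ X := by
  classical
  let _ := linearOrderOfSTO (WellOrderingRel (α := α))
  refine ⟨{x | x < s x}, fun x ↦ ?_⟩
  rw [Set.mem_ofPred, Set.mem_ofPred, hs x, not_lt, le_iff_lt_or_eq, or_iff_left (hne x)]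

variable {F ι : Type*} [Field F] [DecidableEq ι] {T : Matrix ι ι F} {H : Finset ι}

/-- The unit vectors `e_a` with `a ∈ H`, followed by their images under `T`. When `T` is an
involution that exchanges the coordinate subspaces of `H` and of its complement, this is a basis
which `T` permutes by swapping the two halves. -/
def unitVecWithImage (T : Matrix ι ι F) (H : Finset ι) : H ⊕ H → ι → F :=
  Sum.elim (fun a ↦ Pi.single a.1 1) fun a ↦ T.col a.1

variable [Fintype ι]

theorem span_unitVecWithImage_eq_top (hT : T * T = 1)
    (hH : ∀ a b, T a b ≠ 0 → (a ∈ H ↔ b ∉ H)) :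
    Submodule.span F (Set.range (unitVecWithImage T H)) = ⊤ := by
  refine top_le_iff.1 ((Pi.basisFun F ι).span_eq.ge.trans (Submodule.span_le.2 ?_))
  rintro _ ⟨a, rfl⟩
  rw [Pi.basisFun_apply]
  by_cases ha : a ∈ H
  · exact Submodule.subset_span ⟨.inl ⟨a, ha⟩, rfl⟩
  · rw [← mulVec_col_of_mul_self_eq_one hT a, mulVec_eq_sum]
    refine Submodule.sum_mem _ fun c _ ↦ ?_
    by_cases hc : T c a = 0
    · simp [hc]
    · rw [op_smul_eq_smul]
      exact Submodule.smul_mem _ _ (Submodule.subset_span ⟨.inr ⟨c, (hH c a hc).2 ha⟩, rfl⟩)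

theorem mulVec_unitVecWithImage (hT : T * T = 1) (x : H ⊕ H) :
    T *ᵥ unitVecWithImage T H x = unitVecWithImage T H x.swap := by
  obtain a | a := x
  · exact mulVec_single_one T a.1
  · exact mulVec_col_of_mul_self_eq_one hT a.1

theorem card_le_two_mul_card (hT : T * T = 1) (hH : ∀ a b, T a b ≠ 0 → (a ∈ H ↔ b ∉ H)) :
    Fintype.card ι ≤ 2 * H.card := by
  have h := finrank_range_le_card (R := F) (unitVecWithImage T H)
  rw [Set.finrank, span_unitVecWithImage_eq_top hT hH, finrank_top,
    Module.finrank_fintype_fun_eq_card, Fintype.card_sum, Fintype.card_coe, ← two_mul] at h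
  exact h

-- The lower bound for `#H` holds for `#Hᶜ` as well, and the two cardinalities add up to `#ι`.
theorem card_eq_two_mul_card (hT : T * T = 1) (hH : ∀ a b, T a b ≠ 0 → (a ∈ H ↔ b ∉ H)) :
    Fintype.card ι = 2 * H.card := by
  have hcompl := card_le_two_mul_card (H := Hᶜ) hT fun a b hab ↦ by
    simpa using not_congr (hH a b hab)
  have := card_le_two_mul_card hT hH
  have := H.card_add_card_compl
  lia

theorem exists_basis_eq_unitVecWithImage (hT : T * T = 1)
    (hH : ∀ a b, T a b ≠ 0 → (a ∈ H ↔ b ∉ H)) :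
    ∃ b : Module.Basis (H ⊕ H) F (ι → F), ⇑b = unitVecWithImage T H :=
  ⟨basisOfTopLeSpanOfCardEqFinrank _ (span_unitVecWithImage_eq_top hT hH).ge
    (by simp [card_eq_two_mul_card hT hH, two_mul]), coe_basisOfTopLeSpanOfCardEqFinrank _ _ _⟩

end SwappedBasis

section Classification

variable {F ι G : Type*} [Field F] [Group G] [Fintype ι] [DecidableEq ι] {t : ι → G}
  {T : Matrix ι ι F}

theorem isTypeA_of_isDegreePreserving (h2 : (2 : F) ≠ 0) (hT : T * T = 1)
    (hdeg : IsDegreePreserving t t T) :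
    IsTypeA F (elemGrading F t) (superOfInvolution T) := by
  obtain ⟨b, l, π, hb, hTb⟩ := exists_basis_homogeneous_eigenvectors h2 hT hdeg
  exact isTypeA_of_basis h2 b hb hTb

theorem isTypeQ_of_isDegreePreserving {h : G} (hne : h ≠ 1) (hh : h ^ 2 = 1) (hT : T * T = 1)
    (hdeg : IsDegreePreserving t (fun a ↦ h * t a) T) :
    IsTypeQ F (elemGrading F t) (superOfInvolution T) := by
  classical
  obtain ⟨X, hX⟩ := exists_set_apply_mem_iff_notMem (s := (h * ·))
    (fun x ↦ by simp [← mul_assoc, ← pow_two, hh]) fun x ↦ mul_ne_right.2 hne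
  obtain ⟨b, hb⟩ := exists_basis_eq_unitVecWithImage (H := {a | t a ∈ X}) hT fun a c hac ↦ by
    simp [hdeg a c hac, hX]
  refine isTypeQ_of_basis hne hh b (l := fun a ↦ t a) ?_ fun x ↦ ?_
  · rw [hb]
    rintro (x | x) a hxa
    · refine congrArg t (not_imp_comm.1 (fun hax ↦ ?_) hxa)
      exact Pi.single_eq_of_ne hax 1
    · exact hdeg a x hxa
  · rw [hb, mulVec_unitVecWithImage hT]

theorem elementary_graded_matrix_superalgebra_classification_general (h2 : (2 : F) ≠ 0)
    (hF : ∀ c : F, IsSquare c) {S : ZMod 2 → Submodule F (Matrix ι ι F)}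
    (hS : IsSuperGrading F S) (hcompat : SuperCompatible F (elemGrading F t) S) :
    IsTypeA F (elemGrading F t) S ∨ IsTypeQ F (elemGrading F t) S := by
  obtain ⟨T, hT, rfl⟩ := hS.exists_eq_superOfInvolution h2 hF
  obtain ⟨h, hh, hdeg⟩ := exists_isDegreePreserving_of_superCompatible hcompat
  obtain rfl | hne := eq_or_ne h 1
  · exact .inl (isTypeA_of_isDegreePreserving h2 hT (by simpa using hdeg))
  · exact .inr (isTypeQ_of_isDegreePreserving hne hh hT hdeg)

end Classification

/-- **Theorem (Bahturin–Shestakov).** Let `G` be a finite abelian group, `F` an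
algebraically closed field of characteristic `≠ 2`, and `R` a `G`-graded
finite-dimensional associative superalgebra which is simple as an associative algebra
(hence a matrix algebra `M_N(F)`), whose `G`-grading is elementary.  Then, as a
`G`-graded superalgebra, `R` is isomorphic to a superalgebra of type `A(θ; p̄)`
or of type `Q(θ; h)`. -/
theorem elementary_graded_matrix_superalgebra_classification
    (F : Type*) [Field F] [IsAlgClosed F] (hchar : (2 : F) ≠ 0)
    (G : Type*) [CommGroup G] [Fintype G] [DecidableEq G]
    (N : ℕ) (hN : 0 < N)
    (S : ZMod 2 → Submodule F (Matrix (Fin N) (Fin N) F)) (hS : IsSuperGrading F S)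
    (A : G → Submodule F (Matrix (Fin N) (Fin N) F)) (hA : IsAlgGrading F G A)
    (helem : ∃ t : Fin N → G, ∀ g, A g = elemGrading F t g)
    (hcompat : SuperCompatible F A S) :
    -- type `A(θ; p̄)`
    (∃ (r : ℕ) (p q : Fin r → ℕ) (g : Fin r → G), Function.Injective g ∧
      ∃ e : Matrix (Fin N) (Fin N) F ≃ₐ[F]
          Matrix (Σ i : Fin r, (Fin (p i) ⊕ Fin (q i)))
            (Σ i : Fin r, (Fin (p i) ⊕ Fin (q i))) F,
        (∀ γ : G, (A γ).map e.toLinearMap = elemGrading F (fun x => g x.1) γ) ∧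
        (∀ π : ZMod 2, (S π).map e.toLinearMap
          = parSuper F (fun x : (Σ i : Fin r, (Fin (p i) ⊕ Fin (q i))) =>
              Sum.elim (fun _ => (0 : ZMod 2)) (fun _ => 1) x.2) π)) ∨
    -- type `Q(θ; h)`
    (∃ (r : ℕ) (k : Fin r → ℕ) (g : Fin r → G) (h : G),
      Function.Injective g ∧ h ≠ 1 ∧ h ^ 2 = 1 ∧
      ∃ e : Matrix (Fin N) (Fin N) F ≃ₐ[F]
          Matrix (Σ i : Fin r, (Fin (k i) ⊕ Fin (k i)))
            (Σ i : Fin r, (Fin (k i) ⊕ Fin (k i))) F,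
        (∀ γ : G, (A γ).map e.toLinearMap
          = elemGrading F (fun x : (Σ i : Fin r, (Fin (k i) ⊕ Fin (k i))) =>
              Sum.elim (fun _ => g x.1) (fun _ => g x.1 * h) x.2) γ) ∧
        (∀ π : ZMod 2, (S π).map e.toLinearMap
          = swSuper F (fun x : (Σ i : Fin r, (Fin (k i) ⊕ Fin (k i))) =>
              ⟨x.1, x.2.swap⟩) π)) := by
  obtain ⟨t, ht⟩ := helem
  obtain rfl := funext ht
  simpa only [IsTypeA, IsTypeQ, matPar, mul_comm] using
    elementary_graded_matrix_superalgebra_classification_general hchar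
      IsAlgClosed.exists_eq_mul_self hS hcompat
end

section
/- Let G be a finite abelian group, h ∈ G an element of order 2, and let R′ = M_{n,n}(F) carry the elementary G-grading defined by the tuple θ′ = (g₁^{(k₁)}, g₃^{(k₃)}, …, g_{2r−1}^{(k_{2r−1})}, g₁h^{(k₁)}, g₃h^{(k₃)}, …, g_{2r−1}h^{(k_{2r−1})}) with pairwise distinct g_i and k₁+k₃+…+k_{2r−1} = n, where in the 2×2 block form A = [[X,Y],[Z,T]] (all blocks n×n) the even part consists of matrices with X = T and Y = Z, and the odd part of matrices with X = −T and Y = −Z. Then, as a G-graded superalgebra, R′ is isomorphic to the superalgebra of type Q(θ;h) with θ = (g₁^{(k₁)}, g₁h^{(k₁)}, …, g_{2r−1}^{(k_{2r−1})}, g_{2r−1}h^{(k_{2r−1})}). -/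
open scoped TensorProduct

section Reindex

variable {F : Type*} [Field F] {ι κ : Type*} (σ : ι ≃ κ)

theorem map_reindex_elemGrading {G : Type*} [Group G] (t : κ → G) (γ : G) :
    (elemGrading F (t ∘ σ) γ).map (Matrix.reindexLinearEquiv F F σ σ).toLinearMap =
      elemGrading F t γ := by
  rw [Submodule.map_equiv_eq_comap_symm]
  ext X
  exact σ.forall₂_congr σ Iff.rfl

theorem map_reindex_swSuper {s : ι → ι} {s' : κ → κ} (hs : Function.Semiconj σ s s')
    (p : ZMod 2) :
    (swSuper F s p).map (Matrix.reindexLinearEquiv F F σ σ).toLinearMap = swSuper F s' p := by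
  rw [Submodule.map_equiv_eq_comap_symm]
  ext X
  refine σ.forall₂_congr σ ?_
  intro a b
  rw [← hs a, ← hs b]
  rfl

end Reindex

/- Both superalgebras are the same matrix algebra with its rows and columns listed in two orders:
all the `g i` before all the `g i * h`, or the two copies side by side for each `i`. The bijection
`Equiv.sigmaSumDistrib` between the orders carries one tuple of degrees to the other and
intertwines the involutions exchanging the two copies. -/
theorem exampleTwo_iso_typeQ_general (F : Type*) [Field F] {G : Type*} [Group G]
    {ι : Type*} [Fintype ι] [DecidableEq ι]
    (κ : ι → Type*) [∀ i, Fintype (κ i)] [∀ i, DecidableEq (κ i)] (g : ι → G) (h : G) :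
    ∃ e : Matrix ((Σ i, κ i) ⊕ (Σ i, κ i)) ((Σ i, κ i) ⊕ (Σ i, κ i)) F ≃ₐ[F]
          Matrix (Σ i, κ i ⊕ κ i) (Σ i, κ i ⊕ κ i) F,
      (∀ γ : G,
        (elemGrading F (Sum.elim (fun x : Σ i, κ i => g x.1)
            (fun x : Σ i, κ i => g x.1 * h)) γ).map e.toLinearMap
          = elemGrading F (fun x : Σ i, κ i ⊕ κ i =>
              Sum.elim (fun _ => g x.1) (fun _ => g x.1 * h) x.2) γ) ∧
      (∀ p : ZMod 2,
        (swSuper F (Sum.swap : (Σ i, κ i) ⊕ (Σ i, κ i) → _) p).map e.toLinearMap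
          = swSuper F (fun x : Σ i, κ i ⊕ κ i => ⟨x.1, x.2.swap⟩) p) := by
  let σ := (Equiv.sigmaSumDistrib κ κ).symm
  have degree_comp : (fun x : Σ i, κ i ⊕ κ i =>
      Sum.elim (fun _ => g x.1) (fun _ => g x.1 * h) x.2) ∘ σ =
        Sum.elim (fun x => g x.1) (fun x => g x.1 * h) := by
    ext (x | x) <;> rfl
  have swap_semiconj : Function.Semiconj σ Sum.swap (fun x => ⟨x.1, x.2.swap⟩) := by
    rintro (x | x) <;> rfl
  refine ⟨Matrix.reindexAlgEquiv F F σ, fun γ => ?_, map_reindex_swSuper σ swap_semiconj⟩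
  rw [← degree_comp]
  exact map_reindex_elemGrading σ _ γ

/-- **Lemma.** The matrix superalgebra `M_{n,n}(F)` (rows and columns indexed by
`(Σ i, Fin (k i)) ⊕ (Σ i, Fin (k i))`, with even part the matrices `[[X,Y],[Y,X]]`
and odd part the matrices `[[X,Y],[-Y,-X]]`, i.e. the `Sum.swap`-(anti)invariant ones)
carrying the elementary `G`-grading given by the tuple
`θ' = (g₁^{(k₁)}, …, g_r^{(k_r)}, g₁h^{(k₁)}, …, g_rh^{(k_r)})` with the `g i` pairwise
distinct and `h` of order 2 is, as a `G`-graded superalgebra, isomorphic to the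
superalgebra of type `Q(θ; h)` with
`θ = (g₁^{(k₁)}, g₁h^{(k₁)}, …, g_r^{(k_r)}, g_rh^{(k_r)})`. -/
theorem exampleTwo_iso_typeQ
    (F : Type*) [Field F]
    (G : Type*) [CommGroup G] [Fintype G] [DecidableEq G]
    (r : ℕ) (k : Fin r → ℕ) (g : Fin r → G) (hg : Function.Injective g)
    (h : G) (hh1 : h ≠ 1) (hh2 : h ^ 2 = 1) :
    ∃ e : Matrix ((Σ i : Fin r, Fin (k i)) ⊕ (Σ i : Fin r, Fin (k i)))
            ((Σ i : Fin r, Fin (k i)) ⊕ (Σ i : Fin r, Fin (k i))) F ≃ₐ[F]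
          Matrix (Σ i : Fin r, (Fin (k i) ⊕ Fin (k i)))
            (Σ i : Fin r, (Fin (k i) ⊕ Fin (k i))) F,
      (∀ γ : G,
        (elemGrading F (Sum.elim (fun x : Σ i : Fin r, Fin (k i) => g x.1)
            (fun x : Σ i : Fin r, Fin (k i) => g x.1 * h)) γ).map e.toLinearMap
          = elemGrading F (fun x : (Σ i : Fin r, (Fin (k i) ⊕ Fin (k i))) =>
              Sum.elim (fun _ => g x.1) (fun _ => g x.1 * h) x.2) γ) ∧
      (∀ π : ZMod 2,
        (swSuper F (Sum.swap :
            (Σ i : Fin r, Fin (k i)) ⊕ (Σ i : Fin r, Fin (k i)) → _) π).map e.toLinearMap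
          = swSuper F (fun x : (Σ i : Fin r, (Fin (k i) ⊕ Fin (k i))) =>
              ⟨x.1, x.2.swap⟩) π) :=
  exampleTwo_iso_typeQ_general F (fun i => Fin (k i)) g h
end

section
/- Let R = M_n(F) be a G-graded matrix algebra over an algebraically closed field of characteristic zero, where G is a finite group. Then dim R_e ≥ 1, where e is the identity of G. Moreover, dim R_e = 1 if and only if the G-grading is fine. -/
open scoped TensorProduct

/-!
A semisimple ring is von Neumann regular: every `x` satisfies `x * r * x = x` for some `r`. If `x`
is homogeneous of degree `g`, then `r` may be replaced by its component `y` of degree `g⁻¹`.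
Suppose `R_e` is the line of scalars. Then `y * x` is a scalar fixing `x`, so `y * x = 1` when
`x ≠ 0`, and every `w ∈ R_g` is `w = (w * y) * x`, a multiple of `x` because `w * y` is a scalar.
-/

theorem exists_mul_mul_self_eq_of_isSemisimpleRing {R : Type*} [Ring R] [IsSemisimpleRing R]
    (x : R) : ∃ r, x * r * x = x := by
  obtain ⟨e, he, hspan⟩ := IsSemisimpleRing.ideal_eq_span_idempotent (Ideal.span {x})
  obtain ⟨a, rfl⟩ : ∃ a, a * e = x :=
    Ideal.mem_span_singleton'.mp (hspan ▸ Ideal.mem_span_singleton_self x)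
  obtain ⟨r, hr⟩ : ∃ r, r * (a * e) = e :=
    Ideal.mem_span_singleton'.mp (hspan ▸ Ideal.mem_span_singleton_self e)
  exact ⟨r, by rw [mul_assoc, hr, mul_assoc, he.eq]⟩

namespace IsAlgGrading

variable {F : Type*} [Field F] {G : Type*} [Group G] [DecidableEq G] {R : Type*} [Ring R]
  [Algebra F R] {A : G → Submodule F R} {g : G} {x : R}

theorem coe_decompose_mul_of_left_mem [DirectSum.Decomposition A] (hA : IsAlgGrading F G A)
    (hx : x ∈ A g) (r : R) (h : G) :
    (DirectSum.decompose A (x * r) (g * h) : R) = x * DirectSum.decompose A r h := by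
  induction r using DirectSum.Decomposition.inductionOn A with
  | zero => simp
  | @homogeneous k r =>
    have hxr : x * r ∈ A (g * k) := hA.mul_mem hx r.2
    by_cases hk : k = h
    · subst hk
      rw [DirectSum.decompose_of_mem_same A hxr, DirectSum.decompose_of_mem_same A r.2]
    · rw [DirectSum.decompose_of_mem_ne A hxr (by simpa using hk),
        DirectSum.decompose_of_mem_ne A r.2 hk, mul_zero]
  | add r s hr hs => simp [mul_add, hr, hs]

theorem coe_decompose_mul_of_right_mem [DirectSum.Decomposition A] (hA : IsAlgGrading F G A)
    (hx : x ∈ A g) (r : R) (h : G) :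
    (DirectSum.decompose A (r * x) (h * g) : R) = DirectSum.decompose A r h * x := by
  induction r using DirectSum.Decomposition.inductionOn A with
  | zero => simp
  | @homogeneous k r =>
    have hrx : r * x ∈ A (k * g) := hA.mul_mem r.2 hx
    by_cases hk : k = h
    · subst hk
      rw [DirectSum.decompose_of_mem_same A hrx, DirectSum.decompose_of_mem_same A r.2]
    · rw [DirectSum.decompose_of_mem_ne A hrx (by simpa using hk),
        DirectSum.decompose_of_mem_ne A r.2 hk, zero_mul]
  | add r s hr hs => simp [add_mul, hr, hs]

theorem one_mem (hA : IsAlgGrading F G A) : (1 : R) ∈ A 1 := by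
  let _ := hA.internal.chooseDecomposition
  set c : A 1 := DirectSum.decompose A 1 1
  have mul_c (r : R) : r * c = r := by
    induction r using DirectSum.Decomposition.inductionOn A with
    | zero => exact zero_mul _
    | @homogeneous k r =>
      have hr := hA.coe_decompose_mul_of_left_mem r.2 1 1
      rwa [mul_one, mul_one, DirectSum.decompose_of_mem_same A r.2, eq_comm] at hr
    | add r s hr hs => rw [add_mul, hr, hs]
  have hc : (c : R) = 1 := by rw [← one_mul (c : R), mul_c]
  exact hc ▸ c.2

theorem one_component_ne_bot [Nontrivial R] (hA : IsAlgGrading F G A) : A 1 ≠ ⊥ :=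
  (Submodule.ne_bot_iff _).mpr ⟨1, hA.one_mem, one_ne_zero⟩

theorem exists_mem_inv_mul_mul_self_eq (hA : IsAlgGrading F G A) (hx : x ∈ A g)
    (hreg : ∃ r, x * r * x = x) : ∃ y ∈ A g⁻¹, x * y * x = x := by
  let _ := hA.internal.chooseDecomposition
  obtain ⟨r, hr⟩ := hreg
  refine ⟨DirectSum.decompose A r g⁻¹, SetLike.coe_mem _, ?_⟩
  calc x * DirectSum.decompose A r g⁻¹ * x
      = DirectSum.decompose A (x * (r * x)) (g * (g⁻¹ * g)) := by
        rw [hA.coe_decompose_mul_of_left_mem hx, hA.coe_decompose_mul_of_right_mem hx, mul_assoc]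
    _ = x := by
        rw [← mul_assoc x, hr, inv_mul_cancel, mul_one, DirectSum.decompose_of_mem_same A hx]

theorem exists_smul_one_eq_of_finrank_eq_one [Nontrivial R] (hA : IsAlgGrading F G A)
    (hdim : Module.finrank F (A 1) = 1) (hx : x ∈ A 1) : ∃ a : F, a • (1 : R) = x := by
  have h1 : (⟨1, hA.one_mem⟩ : A 1) ≠ 0 := Subtype.coe_ne_coe.mp one_ne_zero
  obtain ⟨a, ha⟩ := (finrank_eq_one_iff_of_nonzero' _ h1).mp hdim ⟨x, hx⟩
  exact ⟨a, congrArg Subtype.val ha⟩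

theorem exists_mem_inv_mul_eq_one (hA : IsAlgGrading F G A)
    (hdim : Module.finrank F (A 1) = 1) (hx : x ∈ A g) (hx0 : x ≠ 0)
    (hreg : ∃ r, x * r * x = x) : ∃ y ∈ A g⁻¹, y * x = 1 := by
  have : Nontrivial R := nontrivial_of_ne x 0 hx0
  obtain ⟨y, hy, hxyx⟩ := hA.exists_mem_inv_mul_mul_self_eq hx hreg
  have hyx : y * x ∈ A 1 := inv_mul_cancel g ▸ hA.mul_mem hy hx
  obtain ⟨c, hc⟩ := hA.exists_smul_one_eq_of_finrank_eq_one hdim hyx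
  have hcx : c • x = (1 : F) • x := by
    rw [one_smul, ← mul_smul_one c x, hc, ← mul_assoc, hxyx]
  have hc1 : c = 1 := smul_left_injective F hx0 hcx
  exact ⟨y, hy, by rw [← hc, hc1, one_smul]⟩

theorem finrank_eq_one_of_finrank_one_eq_one (hA : IsAlgGrading F G A)
    (hdim : Module.finrank F (A 1) = 1) (hx : x ∈ A g) (hx0 : x ≠ 0)
    (hreg : ∃ r, x * r * x = x) : Module.finrank F (A g) = 1 := by
  have : Nontrivial R := nontrivial_of_ne x 0 hx0
  obtain ⟨y, hy, hyx⟩ := hA.exists_mem_inv_mul_eq_one hdim hx hx0 hreg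
  refine finrank_eq_one (⟨x, hx⟩ : A g) (Subtype.coe_ne_coe.mp hx0) fun ⟨w, hw⟩ => ?_
  have hwy : w * y ∈ A 1 := mul_inv_cancel g ▸ hA.mul_mem hw hy
  obtain ⟨b, hb⟩ := hA.exists_smul_one_eq_of_finrank_eq_one hdim hwy
  refine ⟨b, Subtype.ext ?_⟩
  calc b • x = w * y * x := by rw [← hb, smul_one_mul]
    _ = w := by rw [mul_assoc, hyx, mul_one]

theorem finrank_one_eq_one_iff_isFineGrading [IsSemisimpleRing R] [Nontrivial R]
    (hA : IsAlgGrading F G A) : Module.finrank F (A 1) = 1 ↔ IsFineGrading F A := by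
  refine ⟨fun hdim g hg => ?_, fun hfine => hfine 1 hA.one_component_ne_bot⟩
  obtain ⟨x, hx, hx0⟩ := (Submodule.ne_bot_iff _).mp hg
  exact hA.finrank_eq_one_of_finrank_one_eq_one hdim hx hx0
    (exists_mul_mul_self_eq_of_isSemisimpleRing x)

end IsAlgGrading

theorem identity_component_dim_and_fine_general
    {F : Type*} [Field F] {G : Type*} [Group G] [DecidableEq G]
    {R : Type*} [Ring R] [Algebra F R] [FiniteDimensional F R] [IsSemisimpleRing R] [Nontrivial R]
    {A : G → Submodule F R} (hA : IsAlgGrading F G A) :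
    1 ≤ Module.finrank F (A 1) ∧ (Module.finrank F (A 1) = 1 ↔ IsFineGrading F A) :=
  ⟨Submodule.one_le_finrank_iff.mpr hA.one_component_ne_bot,
    hA.finrank_one_eq_one_iff_isFineGrading⟩

/-- **Lemma.** Let `R = M_n(F)` be a `G`-graded matrix algebra over an algebraically
closed field of characteristic zero, `G` a finite group.  Then `dim R_e ≥ 1`, and
`dim R_e = 1` if and only if the `G`-grading is fine. -/
theorem identity_component_dim_and_fine
    (F : Type*) [Field F] [IsAlgClosed F] [CharZero F]
    (G : Type*) [Group G] [Fintype G] [DecidableEq G]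
    (n : ℕ) (hn : 0 < n)
    (A : G → Submodule F (Matrix (Fin n) (Fin n) F))
    (hA : IsAlgGrading F G A) :
    1 ≤ Module.finrank F (A (1 : G)) ∧
      (Module.finrank F (A (1 : G)) = 1 ↔ IsFineGrading F A) := by
  have : Nonempty (Fin n) := ⟨⟨0, hn⟩⟩
  exact identity_component_dim_and_fine_general hA
end

section
/- Any finite-dimensional involution simple associative superalgebra with superinvolution * over an algebraically closed field of characteristic different from 2 is isomorphic to one of the following: (1) R = M_{n,m}(F) with the orthosymplectic or transpose superinvolution; (2) R = M_{n,m}(F) ⊕ M_{n,m}(F)^{sop} with the exchange superinvolution; (3) R = Q(n) ⊕ Q(n)^{sop} with the exchange superinvolution. -/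
open scoped TensorProduct

open Matrix


/-- The permutation matrix of a permutation `π`. -/
def permMat (F : Type*) [Field F] {ι : Type*} [DecidableEq ι] (π : Equiv.Perm ι) :
    Matrix ι ι F :=
  fun a b => if π a = b then 1 else 0

/-- A signed permutation matrix: entry `±1` at `(a, π a)`, the sign given by `sg a`. -/
def signedPermMat (F : Type*) [Field F] {ι : Type*} [DecidableEq ι] (π : Equiv.Perm ι)
    (sg : ι → Bool) : Matrix ι ι F :=
  fun a b => if π a = b then (if sg a then 1 else -1) else 0

/-- The superinvolution `X ↦ Φ⁻¹ X^τ Φ` of the matrix superalgebra `M_{n,m}(F)`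
determined by the matrix `Φ`. -/
noncomputable def matStarOfPhi (F : Type*) [Field F] {n m : ℕ}
    (Φ : Matrix (Fin n ⊕ Fin m) (Fin n ⊕ Fin m) F)
    (X : Matrix (Fin n ⊕ Fin m) (Fin n ⊕ Fin m) F) :
    Matrix (Fin n ⊕ Fin m) (Fin n ⊕ Fin m) F :=
  Φ⁻¹ * tauL F matPar X * Φ

/-- `φ` is a superinvolution of orthosymplectic type on `M_{n,m}(F)`:
`φ X = Φ⁻¹ X^τ Φ` with `Φ = diag(Φ₀, Φ₁)` invertible, `Φ₀` symmetric and
`Φ₁` skew-symmetric. -/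
def IsOspType (F : Type*) [Field F] {n m : ℕ}
    (φ : Matrix (Fin n ⊕ Fin m) (Fin n ⊕ Fin m) F →ₗ[F]
      Matrix (Fin n ⊕ Fin m) (Fin n ⊕ Fin m) F) : Prop :=
  ∃ (Φ₀ : Matrix (Fin n) (Fin n) F) (Φ₁ : Matrix (Fin m) (Fin m) F),
    IsUnit (Matrix.fromBlocks Φ₀ 0 0 Φ₁) ∧ Φ₀ᵀ = Φ₀ ∧ Φ₁ᵀ = -Φ₁ ∧
    ∀ X, φ X = matStarOfPhi F (Matrix.fromBlocks Φ₀ 0 0 Φ₁) X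

/-- `φ` is a superinvolution of transpose type on `M_{n,n}(F)`:
`φ X = Φ⁻¹ X^τ Φ` with `Φ = [[0, Φ₀ᵗ], [Φ₀, 0]]` invertible. -/
def IsTrpType (F : Type*) [Field F] {n : ℕ}
    (φ : Matrix (Fin n ⊕ Fin n) (Fin n ⊕ Fin n) F →ₗ[F]
      Matrix (Fin n ⊕ Fin n) (Fin n ⊕ Fin n) F) : Prop :=
  ∃ Φ₀ : Matrix (Fin n) (Fin n) F,
    IsUnit (Matrix.fromBlocks 0 Φ₀ᵀ Φ₀ 0) ∧
    ∀ X, φ X = matStarOfPhi F (Matrix.fromBlocks 0 Φ₀ᵀ Φ₀ 0) X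

/-- The standard symplectic matrix `Q = [[0, I_k], [-I_k, 0]]` on `Fin (2k)`. -/
def stdQ (F : Type*) [Field F] (k : ℕ) : Matrix (Fin (2 * k)) (Fin (2 * k)) F :=
  fun a b => if (b : ℕ) = (a : ℕ) + k then 1 else if (a : ℕ) = (b : ℕ) + k then -1 else 0

/-- The superinvolution `X ↦ Φ⁻¹ X^τ Φ` of `M_{n,m}(F)`, as a linear map. -/
noncomputable def matStarL (F : Type*) [Field F] {n m : ℕ}
    (Φ : Matrix (Fin n ⊕ Fin m) (Fin n ⊕ Fin m) F) :
    Matrix (Fin n ⊕ Fin m) (Fin n ⊕ Fin m) F →ₗ[F]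
      Matrix (Fin n ⊕ Fin m) (Fin n ⊕ Fin m) F where
  toFun X := Φ⁻¹ * tauL F matPar X * Φ
  map_add' X Y := by
    show Φ⁻¹ * tauL F matPar (X + Y) * Φ = _
    rw [map_add, Matrix.mul_add, Matrix.add_mul]
  map_smul' c X := by
    show Φ⁻¹ * tauL F matPar (c • X) * Φ = _
    rw [LinearMap.map_smul, Matrix.mul_smul, Matrix.smul_mul, RingHom.id_apply]

/-- Projection on the odd part of a matrix superalgebra with index parity `π`. -/
def oddProj (F : Type*) [Field F] {ι : Type*} (π : ι → ZMod 2) :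
    Matrix ι ι F →ₗ[F] Matrix ι ι F where
  toFun X := fun a b => if π a + π b = 1 then X a b else 0
  map_add' X Y := by
    funext a b
    change (if π a + π b = 1 then X a b + Y a b else 0) =
      (if π a + π b = 1 then X a b else 0) + (if π a + π b = 1 then Y a b else 0)
    by_cases h : π a + π b = 1 <;> simp [h]
  map_smul' c X := by
    funext a b
    change (if π a + π b = 1 then c * X a b else 0) =
      c * (if π a + π b = 1 then X a b else 0)
    by_cases h : π a + π b = 1 <;> simp [h]

/-- The super-Jordan product `x ∘ y = ½(xy + (-1)^{|x||y|} yx)` of a superalgebra,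
expressed via the projection `odd` onto the odd part: `½(xy + yx) - y₁x₁`. -/
def superJordanMul (F : Type*) [Field F] {A : Type*} [Ring A] [Algebra F A]
    (odd : A →ₗ[F] A) (x y : A) : A :=
  (2⁻¹ : F) • (x * y + y * x) - odd y * odd x

/-- The super-Lie bracket `[x,y] = xy - (-1)^{|x||y|} yx` of a superalgebra,
expressed via the projection `odd` onto the odd part: `xy - yx + 2 y₁x₁`. -/
def superLieMul (F : Type*) [Field F] {A : Type*} [Ring A] [Algebra F A]
    (odd : A →ₗ[F] A) (x y : A) : A :=
  x * y - y * x + (2 : F) • (odd y * odd x)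

/-- `M_{2^k}(F)` carries a fine `G`-grading `AD` with a graded involution `θ` which is,
as in Theorem 4.1 of the paper (Bahturin–Shestakov–Zaicev), a tensor product of `k`
graded `θ`-stable subalgebras, each graded by a subgroup `H_i ≅ ℤ₂ × ℤ₂`. -/
def IsPauliFineInvolutionGrading (F : Type*) [Field F] (G : Type*) [Group G]
    [DecidableEq G] (k : ℕ)
    (AD : G → Submodule F (Matrix (Fin (2 ^ k)) (Fin (2 ^ k)) F))
    (θ : Matrix (Fin (2 ^ k)) (Fin (2 ^ k)) F →ₗ[F]
      Matrix (Fin (2 ^ k)) (Fin (2 ^ k)) F) : Prop :=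
  IsAlgGrading F G AD ∧ IsFineGrading F AD ∧
  (∀ x, θ (θ x) = x) ∧ (∀ x y, θ (x * y) = θ y * θ x) ∧
  (∀ g, ∀ x ∈ AD g, θ x ∈ AD g) ∧
  ∃ (B : Fin k → Subalgebra F (Matrix (Fin (2 ^ k)) (Fin (2 ^ k)) F))
    (H : Fin k → Subgroup G),
    (∀ i, ∀ x ∈ B i, θ x ∈ B i) ∧
    (∀ i, (B i).toSubmodule = ⨆ h : (H i), ((B i).toSubmodule ⊓ AD (h : G))) ∧
    (∀ i, Nonempty ((H i) ≃* Multiplicative (ZMod 2 × ZMod 2))) ∧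
    Function.Bijective (PiTensorProduct.lift
      ((MultilinearMap.mkPiAlgebraFin F k
          (Matrix (Fin (2 ^ k)) (Fin (2 ^ k)) F)).compLinearMap
        (fun i => ((B i).toSubmodule).subtype)))

/-- The combinatorial data describing the elementary grading and the matrix `Φ`
appearing in the classification of orthosymplectic graded superinvolutions
(Theorem 5.2 of the paper): `r` blocks with pairwise distinct degrees `gdeg i`,
paired by a fixed-point-free involution `ρ` with `gdeg i * gdeg (ρ i) = c` constant;
`β`, `β'` assign blocks to the even/odd indices, and `π₀`, `π₁` are index involutions
lying over `ρ` (giving `p_i = p_{ρ i}` and `q_i = q_{ρ i}`), with a sign orientation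
`sg` for the skew part. -/
structure OspModelData (G : Type*) (s t : ℕ) where
  r : ℕ
  gdeg : Fin r → G
  ρ : Equiv.Perm (Fin r)
  c : G
  β : Fin s → Fin r
  β' : Fin t → Fin r
  π₀ : Equiv.Perm (Fin s)
  π₁ : Equiv.Perm (Fin t)
  sg : Fin t → Bool

def OspModelData.Valid {G : Type*} [Group G] {s t : ℕ} (M : OspModelData G s t) : Prop :=
  Function.Injective M.gdeg ∧
  (∀ i, M.ρ (M.ρ i) = i) ∧ (∀ i, M.ρ i ≠ i) ∧ (∀ i, M.gdeg i * M.gdeg (M.ρ i) = M.c) ∧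
  (∀ a, M.π₀ (M.π₀ a) = a) ∧ (∀ a, M.β (M.π₀ a) = M.ρ (M.β a)) ∧
  (∀ a, M.π₁ (M.π₁ a) = a) ∧ (∀ a, M.β' (M.π₁ a) = M.ρ (M.β' a)) ∧
  (∀ a, M.sg (M.π₁ a) = ! M.sg a)

/-- The degree tuple `(g₁^{(p₁)}, …, g_r^{(p_r)}, g₁^{(q₁)}, …, g_r^{(q_r)})`. -/
def OspModelData.deg {G : Type*} {s t : ℕ} (M : OspModelData G s t) :
    Fin s ⊕ Fin t → G :=
  Sum.elim (fun a => M.gdeg (M.β a)) (fun a => M.gdeg (M.β' a))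

/-- The matrix `Φ = diag(Φ₀, Φ₁)` with `Φ₀` the symmetric permutation matrix of `π₀`
(blocks `[[0,I],[I,0]]`) and `Φ₁` the skew-symmetric signed permutation matrix of `π₁`
(blocks `[[0,I],[-I,0]]`). -/
def OspModelData.Phi (F : Type*) [Field F] {G : Type*} {s t : ℕ}
    (M : OspModelData G s t) : Matrix (Fin s ⊕ Fin t) (Fin s ⊕ Fin t) F :=
  Matrix.fromBlocks (permMat F M.π₀) 0 0 (signedPermMat F M.π₁ M.sg)

/-- The orthosymplectic superinvolution `X ↦ Φ⁻¹ X^τ Φ` of the model. -/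
noncomputable def OspModelData.starL (F : Type*) [Field F] {G : Type*} {s t : ℕ}
    (M : OspModelData G s t) :
    Matrix (Fin s ⊕ Fin t) (Fin s ⊕ Fin t) F →ₗ[F]
      Matrix (Fin s ⊕ Fin t) (Fin s ⊕ Fin t) F :=
  matStarL F (M.Phi F)

/-- The combinatorial data describing the elementary grading appearing in the
classification of transpose graded superinvolutions (Theorem 5.3 of the paper):
degree tuples `d`, `d'` for the two halves of the indices with `d a * d' a = c`
constant (this encodes `g₁ g_{i₁} = ⋯ = g_r g_{i_r}`), the degrees of the second half
being among those of the first half (`(i₁, …, i_r)` is a permutation of `(1, …, r)`). -/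
structure TrpModelData (G : Type*) (s : ℕ) where
  d : Fin s → G
  d' : Fin s → G
  c : G

def TrpModelData.Valid {G : Type*} [Group G] {s : ℕ} (M : TrpModelData G s) : Prop :=
  (∀ a, M.d a * M.d' a = M.c) ∧ Set.range M.d' ⊆ Set.range M.d

/-- The degree tuple `(g₁^{(p₁)}, …, g_r^{(p_r)}, g_{i₁}^{(q_{i₁})}, …, g_{i_r}^{(q_{i_r})})`. -/
def TrpModelData.deg {G : Type*} {s : ℕ} (M : TrpModelData G s) : Fin s ⊕ Fin s → G :=
  Sum.elim M.d M.d'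

/-- The transpose superinvolution `X ↦ Φ⁻¹ X^τ Φ`, `Φ = [[0, I_n], [I_n, 0]]`. -/
noncomputable def TrpModelData.starL (F : Type*) [Field F] {G : Type*} {s : ℕ}
    (_M : TrpModelData G s) :
    Matrix (Fin s ⊕ Fin s) (Fin s ⊕ Fin s) F →ₗ[F]
      Matrix (Fin s ⊕ Fin s) (Fin s ⊕ Fin s) F :=
  matStarL F (Matrix.fromBlocks 0 (1 : Matrix (Fin s) (Fin s) F) 1 0)

/-- The inverse of the supertranspose `τ`. -/
def tauInvL (F : Type*) [Field F] {ι : Type*} (π : ι → ZMod 2) :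
    Matrix ι ι F →ₗ[F] Matrix ι ι F where
  toFun X := fun a b => (if π a = 0 ∧ π b = 1 then (-1 : F) else 1) * X b a
  map_add' X Y := by funext a b; exact mul_add _ (X b a) (Y b a)
  map_smul' c X := by
    funext a b
    exact mul_left_comm _ c (X b a)

/-- `retag u v` is the index with the block tag of `u` and the `Fin`-value of `v`. -/
def retag {n : ℕ} (u v : Fin n ⊕ Fin n) : Fin n ⊕ Fin n :=
  match u with
  | Sum.inl _ => Sum.inl (Sum.elim id id v)
  | Sum.inr _ => Sum.inr (Sum.elim id id v)

/-- The super-antiautomorphism `[[A,B],[B,A]] ↦ [[Aᵗ,cBᵗ],[cBᵗ,Aᵗ]]` of `Q(n)`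
(blockwise transposition with the odd blocks scaled by `c`); for `c² = -1` it realises
the isomorphism `Q(n)^{sop} ≅ Q(n)`. -/
def qTransp (F : Type*) [Field F] {n : ℕ} (c : F)
    (X : Matrix (Fin n ⊕ Fin n) (Fin n ⊕ Fin n) F) :
    Matrix (Fin n ⊕ Fin n) (Fin n ⊕ Fin n) F :=
  fun u v => (if matPar u = matPar v then 1 else c) * X (retag u v) (retag v u)

/-!
Fix `i` with `i ^ 2 = -1`. Multiplying `φ` by `i` on the odd part turns the superinvolution into an
ordinary antiautomorphism `θ` whose square is the parity automorphism, so that superideals stable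
under `φ` are the same as ideals stable under `θ`. A simple quotient `f : T → M_N(F)` has a dual
`x ↦ (f (θ x))ᵀ`, and dualising four times gives `f` back. Simplicity makes the kernels of the
iterated duals of `f` a single orbit with zero intersection, so by the Chinese remainder theorem
`T` is a product of one, two or four matrix algebras. With one factor, `θ` is the adjoint of a
bilinear form which Skolem-Noether forces to be symmetric or skew-symmetric up to parity, and its
normal forms are the orthosymplectic and the transpose superinvolutions; two factors give
`M_{n,m}(F) ⊕ M_{n,m}(F)^{sop}`; with four, parity exchanges the factors in pairs, and each pair is
a copy of `Q(n)`.
-/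

namespace SuperInvolution

open Module
open LinearMap (BilinForm)

theorem transpose_toMatrix_mul_mul_toMatrix {F ι κ : Type*} [Field F] [Fintype ι] [DecidableEq ι]
    [Fintype κ] [DecidableEq κ] (A : Matrix ι ι F) (b : Basis κ F (ι → F)) :
    ((Pi.basisFun F ι).toMatrix b)ᵀ * A * (Pi.basisFun F ι).toMatrix b =
      LinearMap.BilinForm.toMatrix b (toBilin' A) := by
  rw [← LinearMap.BilinForm.toMatrix_mul_basis_toMatrix (Pi.basisFun F ι) b,
    LinearMap.BilinForm.toMatrix_basisFun, BilinForm.toMatrix'_toBilin']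

theorem exists_transpose_mul_mul_eq_diagonal {F ι : Type*} [Field F] [Fintype ι] [DecidableEq ι]
    (h2 : (2 : F) ≠ 0) {A : Matrix ι ι F} (hA : A.IsSymm) :
    ∃ (P : Matrix ι ι F) (d : ι → F), IsUnit P ∧ Pᵀ * A * P = diagonal d := by
  have := invertibleOfNonzero h2
  have hsymm : LinearMap.IsSymm (toBilin' A) := by
    refine ⟨fun x y => ?_⟩
    rw [RingHom.id_apply, toBilin'_apply', toBilin'_apply', dotProduct_mulVec, ← mulVec_transpose,
      hA.eq, dotProduct_comm]
  obtain ⟨v, hv⟩ := LinearMap.BilinForm.exists_orthogonal_basis hsymm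
  have e : Fin (finrank F (ι → F)) ≃ ι := Fintype.equivOfCardEq (by simp)
  have := (Pi.basisFun F ι).invertibleToMatrix (v.reindex e)
  refine ⟨(Pi.basisFun F ι).toMatrix (v.reindex e),
    fun i => toBilin' A (v.reindex e i) (v.reindex e i), isUnit_of_invertible _, ?_⟩
  rw [transpose_toMatrix_mul_mul_toMatrix]
  ext i j
  rw [LinearMap.BilinForm.toMatrix_apply]
  rcases eq_or_ne i j with rfl | hij
  · rw [diagonal_apply_eq]
  · simpa [diagonal_apply_ne _ hij] using hv (e.symm.injective.ne hij)

theorem exists_transpose_mul_mul_eq_one {F ι : Type*} [Field F] [IsAlgClosed F]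
    [Fintype ι] [DecidableEq ι] (h2 : (2 : F) ≠ 0) {A : Matrix ι ι F} (hA : A.IsSymm)
    (hu : IsUnit A) : ∃ P : Matrix ι ι F, Pᵀ * A * P = 1 := by
  obtain ⟨Q, d, hQ, hd⟩ := exists_transpose_mul_mul_eq_diagonal h2 hA
  choose s hs using fun i => IsAlgClosed.exists_pow_nat_eq (d i) two_pos
  have hd0 : ∀ i, s i ≠ 0 := by
    have : IsUnit (diagonal d) := hd ▸ (((isUnit_transpose Q).mpr hQ).mul hu).mul hQ
    intro i hi
    rw [isUnit_diagonal, Pi.isUnit_iff] at this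
    exact (this i).ne_zero (by rw [← hs, hi, zero_pow two_ne_zero])
  refine ⟨Q * diagonal s⁻¹, ?_⟩
  calc (Q * diagonal s⁻¹)ᵀ * A * (Q * diagonal s⁻¹)
      = diagonal s⁻¹ * (Qᵀ * A * Q) * diagonal s⁻¹ := by
        simp only [transpose_mul, diagonal_transpose, Matrix.mul_assoc]
    _ = 1 := by
        rw [hd, diagonal_mul_diagonal, diagonal_mul_diagonal, ← diagonal_one]
        congr 1
        funext i
        have := hd0 i
        simp only [← hs, Pi.inv_apply]
        field_simp

theorem isCompl_ker_sub_one_ker_add_one {F V : Type*} [Field F] [AddCommGroup V] [Module F V]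
    (h2 : (2 : F) ≠ 0) {u : Module.End F V} (hu : u * u = 1) :
    IsCompl (LinearMap.ker (u - 1)) (LinearMap.ker (u + 1)) := by
  have huu : ∀ x, u (u x) = x := fun x => LinearMap.congr_fun hu x
  refine IsCompl.of_eq ((Submodule.eq_bot_iff _).mpr fun x hx => ?_)
    (Submodule.eq_top_iff'.mpr fun x => ?_)
  · have hpos : u x - x = 0 := hx.1
    have hneg : u x + x = 0 := hx.2
    have : (2 : F) • x = 0 := by
      calc (2 : F) • x = (u x + x) - (u x - x) := by module
        _ = 0 := by rw [hpos, hneg, sub_zero]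
    exact (smul_eq_zero_iff_right h2).mp this
  · refine Submodule.mem_sup.mpr ⟨(2⁻¹ : F) • (x + u x), ?_, (2⁻¹ : F) • (x - u x), ?_, ?_⟩
    · simp [huu, add_comm]
    · simp [huu]
    · match_scalars <;> field_simp <;> norm_num

theorem exists_basis_toMatrix_eq_fromBlocks {F V : Type*} [Field F] [AddCommGroup V] [Module F V]
    [FiniteDimensional F V] (h2 : (2 : F) ≠ 0) {u : Module.End F V} (hu : u * u = 1) :
    ∃ (n m : ℕ) (b : Basis (Fin n ⊕ Fin m) F V),
      LinearMap.toMatrix b b u = fromBlocks 1 0 0 (-1) := by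
  have h := isCompl_ker_sub_one_ker_add_one h2 hu
  set b := ((finBasis F _).prod (finBasis F _)).map (Submodule.prodEquivOfIsCompl _ _ h)
  have hpos : ∀ i, u (b (Sum.inl i)) = b (Sum.inl i) := fun i => by
    have : (u - 1) (b (Sum.inl i)) = 0 := by simp [b]
    exact sub_eq_zero.mp this
  have hneg : ∀ i, u (b (Sum.inr i)) = -b (Sum.inr i) := fun i => by
    have : (u + 1) (b (Sum.inr i)) = 0 := by simp [b]
    exact eq_neg_of_add_eq_zero_left this
  refine ⟨_, _, b, ?_⟩
  ext (i | i) (j | j) <;>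
    simp [LinearMap.toMatrix_apply, hpos, hneg, Finsupp.single_apply, one_apply, eq_comm (a := j)]

theorem exists_algEquiv_apply_eq_fromBlocks {F ι : Type*} [Field F] [Fintype ι] [DecidableEq ι]
    (h2 : (2 : F) ≠ 0) {U : Matrix ι ι F} (hU : U * U = 1) :
    ∃ (n m : ℕ) (e : Matrix ι ι F ≃ₐ[F] Matrix (Fin n ⊕ Fin m) (Fin n ⊕ Fin m) F),
      e U = fromBlocks 1 0 0 (-1) := by
  obtain ⟨n, m, b, hb⟩ := exists_basis_toMatrix_eq_fromBlocks h2 (u := toLinAlgEquiv' U)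
    (by rw [← map_mul, hU, map_one])
  exact ⟨n, m, toLinAlgEquiv'.trans (LinearMap.toMatrixAlgEquiv b), hb⟩

section Symplectic

variable {F V : Type*} [Field F] [AddCommGroup V] [Module F V]

/-- `b` is a basis in which the Gram matrix of `B` is the standard symplectic matrix. -/
def IsSymplecticBasis {κ : Type*} [DecidableEq κ] [Fintype κ] (B : BilinForm F V)
    (b : Basis (κ ⊕ κ) F V) : Prop :=
  LinearMap.BilinForm.toMatrix b B = fromBlocks 0 1 (-1) 0

theorem toMatrix_prod_map_prodEquivOfIsCompl {ι κ : Type*} [Fintype ι] [Fintype κ]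
    [DecidableEq ι] [DecidableEq κ] {B : BilinForm F V} {W W' : Submodule F V} (h : IsCompl W W')
    (hW : ∀ x ∈ W, ∀ y ∈ W', B x y = 0) (hW' : ∀ x ∈ W', ∀ y ∈ W, B x y = 0)
    (b : Basis ι F W) (b' : Basis κ F W') :
    LinearMap.BilinForm.toMatrix ((b.prod b').map (Submodule.prodEquivOfIsCompl W W' h)) B =
      fromBlocks (LinearMap.BilinForm.toMatrix b (B.restrict W)) 0 0
        (LinearMap.BilinForm.toMatrix b' (B.restrict W')) := by
  ext (i | i) (j | j) <;> simp [LinearMap.BilinForm.toMatrix_apply, hW, hW']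

theorem toMatrix_reindex {ι κ : Type*} [Fintype ι] [Fintype κ] [DecidableEq ι] [DecidableEq κ]
    (B : BilinForm F V) (b : Basis ι F V) (e : ι ≃ κ) :
    LinearMap.BilinForm.toMatrix (b.reindex e) B =
      (LinearMap.BilinForm.toMatrix b B).submatrix e.symm e.symm := by
  ext i j
  simp [LinearMap.BilinForm.toMatrix_apply]

theorem IsSymplecticBasis.prod {κ κ' : Type*} [Fintype κ] [DecidableEq κ] [Fintype κ']
    [DecidableEq κ'] {B : BilinForm F V} {W W' : Submodule F V} (h : IsCompl W W')
    (hW : ∀ x ∈ W, ∀ y ∈ W', B x y = 0) (hW' : ∀ x ∈ W', ∀ y ∈ W, B x y = 0)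
    {b : Basis (κ ⊕ κ) F W} {b' : Basis (κ' ⊕ κ') F W'}
    (hb : IsSymplecticBasis (B.restrict W) b) (hb' : IsSymplecticBasis (B.restrict W') b') :
    IsSymplecticBasis B (((b.prod b').map (Submodule.prodEquivOfIsCompl W W' h)).reindex
      (Equiv.sumSumSumComm κ κ κ' κ')) := by
  rw [IsSymplecticBasis, toMatrix_reindex, toMatrix_prod_map_prodEquivOfIsCompl h hW hW', hb, hb']
  ext ((i | i) | (i | i)) ((j | j) | (j | j)) <;> simp [one_apply]

theorem IsSymplecticBasis.reindex {κ κ' : Type*} [Fintype κ] [DecidableEq κ] [Fintype κ']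
    [DecidableEq κ'] {B : BilinForm F V} {b : Basis (κ ⊕ κ) F V} (hb : IsSymplecticBasis B b)
    (e : κ ≃ κ') : IsSymplecticBasis B (b.reindex (e.sumCongr e)) := by
  rw [IsSymplecticBasis, toMatrix_reindex, hb]
  ext (i | i) (j | j) <;> simp [one_apply]

theorem exists_apply_eq_one {B : BilinForm F V} (hB : B.Nondegenerate) {v : V} (hv : v ≠ 0) :
    ∃ w, B v w = 1 := by
  obtain ⟨w, hw⟩ : ∃ w, B v w ≠ 0 := by
    by_contra! hw
    exact hv (hB.1 v hw)
  exact ⟨(B v w)⁻¹ • w, by simp [hw]⟩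

theorem exists_isSymplecticBasis_restrict {B : BilinForm F V} (hB : B.IsAlt) {v w : V}
    (hvw : B v w = 1) :
    ∃ (W : Submodule F V) (b : Basis (Fin 1 ⊕ Fin 1) F W), IsSymplecticBasis (B.restrict W) b := by
  have hwv : B w v = -1 := by rw [← hvw, LinearMap.IsAlt.neg hB]
  have hli : LinearIndependent F (Sum.elim (fun _ : Fin 1 => v) fun _ : Fin 1 => w) := by
    refine Fintype.linearIndependent_iff.mpr fun g hg => ?_
    have hv := congrArg (B v) hg
    have hw := congrArg (B w) hg
    simp only [Fintype.sum_sum_type, Finset.univ_unique, Fin.default_eq_zero, Sum.elim_inl,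
      Finset.sum_singleton, Sum.elim_inr, map_add, map_smul, hB v, smul_eq_mul, mul_zero, hvw,
      mul_one, zero_add, map_zero, hwv, mul_neg, hB w, add_zero, neg_eq_zero] at hv hw
    rintro (i | i) <;> simp [Subsingleton.elim i 0, hv, hw]
  refine ⟨_, Basis.span hli, ?_⟩
  ext (i | i) (j | j) <;>
    simp [LinearMap.BilinForm.toMatrix_apply, Basis.span_apply, hvw, hwv, hB v, hB w,
      Subsingleton.elim i j]

theorem IsSymplecticBasis.nondegenerate {κ : Type*} [Fintype κ] [DecidableEq κ] {B : BilinForm F V}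
    {b : Basis (κ ⊕ κ) F V} (hb : IsSymplecticBasis B b) : B.Nondegenerate := by
  rw [LinearMap.BilinForm.nondegenerate_iff_det_ne_zero b, hb]
  exact (isUnit_det_of_right_inverse (B := fromBlocks 0 (-1) 1 0)
    (by simp [fromBlocks_multiply])).ne_zero

theorem exists_isSymplecticBasis [FiniteDimensional F V] {B : BilinForm F V} (hB : B.IsAlt)
    (hnd : B.Nondegenerate) :
    ∃ (k : ℕ) (b : Basis (Fin k ⊕ Fin k) F V), IsSymplecticBasis B b := by
  induction h : finrank F V using Nat.strong_induction_on generalizing V with | _ d ih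
  rcases subsingleton_or_nontrivial V with hV | hV
  · exact ⟨0, Basis.empty V, by ext (i | i) <;> exact i.elim0⟩
  subst h
  obtain ⟨v, hv⟩ := exists_ne (0 : V)
  obtain ⟨w, hvw⟩ := exists_apply_eq_one hnd hv
  obtain ⟨W, b, hb⟩ := exists_isSymplecticBasis_restrict hB hvw
  have hrefl : B.IsRefl := LinearMap.IsAlt.isRefl hB
  have hcompl := (LinearMap.BilinForm.restrict_nondegenerate_iff_isCompl_orthogonal hrefl).mp
    hb.nondegenerate
  have hnd' : (B.restrict (B.orthogonal W)).Nondegenerate := by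
    rw [LinearMap.BilinForm.restrict_nondegenerate_iff_isCompl_orthogonal hrefl,
      LinearMap.BilinForm.orthogonal_orthogonal hnd hrefl]
    exact hcompl.symm
  have hlt : finrank F (B.orthogonal W) < finrank F V := by
    rw [← Submodule.finrank_add_eq_of_isCompl hcompl, finrank_eq_card_basis b]
    simp
  obtain ⟨k, b', hb'⟩ := ih _ hlt (B := B.restrict (B.orthogonal W)) (fun x => hB x) hnd' rfl
  exact ⟨1 + k, _, (hb.prod hcompl (fun x hx y hy => hy x hx)
    (fun x hx y hy => hrefl _ _ (hx y hy)) hb').reindex finSumFinEquiv⟩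

end Symplectic

/-- The indexing of two consecutive blocks of size `k` that turns the entrywise definition of `stdQ`
into a block matrix. -/
def finTwoMulEquiv (k : ℕ) : Fin k ⊕ Fin k ≃ Fin (2 * k) :=
  finSumFinEquiv.trans (finCongr (two_mul k).symm)

theorem stdQ_submatrix_finTwoMulEquiv (F : Type*) [Field F] (k : ℕ) :
    (stdQ F k).submatrix (finTwoMulEquiv k) (finTwoMulEquiv k) = fromBlocks 0 1 (-1) 0 := by
  ext (i | i) (j | j) <;> have := i.isLt <;> have := j.isLt <;>
    simp only [stdQ, finTwoMulEquiv, submatrix_apply, Equiv.trans_apply, finSumFinEquiv_apply_left,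
      finSumFinEquiv_apply_right, finCongr_apply, Fin.val_cast, Fin.val_castAdd, Fin.val_natAdd,
      fromBlocks_apply₁₁, fromBlocks_apply₁₂, fromBlocks_apply₂₁, fromBlocks_apply₂₂,
      Matrix.zero_apply, Matrix.neg_apply, one_apply, Fin.ext_iff] <;>
    grind

theorem isAlt_toBilin' {F ι : Type*} [Field F] [Fintype ι] [DecidableEq ι] (h2 : (2 : F) ≠ 0)
    {A : Matrix ι ι F} (hA : Aᵀ = -A) : (toBilin' A).IsAlt := fun x => by
  have h : x ⬝ᵥ A *ᵥ x = -(x ⬝ᵥ A *ᵥ x) := by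
    conv_lhs => rw [dotProduct_mulVec, ← mulVec_transpose, hA, neg_mulVec, neg_dotProduct,
      dotProduct_comm]
  rw [toBilin'_apply']
  exact (mul_eq_zero.mp (by linear_combination h : 2 * (x ⬝ᵥ A *ᵥ x) = 0)).resolve_left h2

theorem exists_transpose_mul_mul_eq_stdQ {F ι : Type*} [Field F] [Fintype ι] [DecidableEq ι]
    (h2 : (2 : F) ≠ 0) {A : Matrix ι ι F} (hA : Aᵀ = -A) (hu : IsUnit A) :
    ∃ (k : ℕ) (P : Matrix ι (Fin (2 * k)) F),
      Fintype.card ι = 2 * k ∧ Pᵀ * A * P = stdQ F k := by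
  obtain ⟨k, b, hb⟩ := exists_isSymplecticBasis (isAlt_toBilin' h2 hA) (by
    rw [LinearMap.BilinForm.nondegenerate_iff_det_ne_zero (Pi.basisFun F ι),
      LinearMap.BilinForm.toMatrix_basisFun, BilinForm.toMatrix'_toBilin']
    exact ((isUnit_iff_isUnit_det A).mp hu).ne_zero)
  refine ⟨k, (Pi.basisFun F ι).toMatrix (b.reindex (finTwoMulEquiv k)), ?_, ?_⟩
  · simpa [two_mul] using finrank_eq_card_basis b
  · rw [transpose_toMatrix_mul_mul_toMatrix, toMatrix_reindex, hb,
      ← stdQ_submatrix_finTwoMulEquiv, submatrix_submatrix]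
    simp

theorem exists_mem_apply_eq_one {T A : Type*} [Ring T] [Ring A] [IsSimpleRing A] {f : T →+* A}
    (hf : Function.Surjective f) {I : Ideal T} [I.IsTwoSided] (hI : ¬I ≤ RingHom.ker f) :
    ∃ u ∈ I, f u = 1 := by
  obtain ⟨x, hxI, hx⟩ := SetLike.not_le_iff_exists.mp hI
  have : RingHomSurjective f := ⟨hf⟩
  have h1 := IsSimpleRing.one_mem_of_ne_zero_mem (I.map f).toTwoSided hx
    (Ideal.mem_toTwoSided.mpr (Ideal.mem_map_of_mem f hxI))
  exact (Ideal.mem_map_iff_of_surjective f hf).mp (Ideal.mem_toTwoSided.mp h1)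

theorem pi_surjective {T κ : Type*} [Ring T] [Finite κ] {A : κ → Type*} [∀ k, Ring (A k)]
    [∀ k, IsSimpleRing (A k)] {f : ∀ k, T →+* A k} (hf : ∀ k, Function.Surjective (f k))
    (hker : ∀ j k, j ≠ k → ¬RingHom.ker (f j) ≤ RingHom.ker (f k)) :
    Function.Surjective (RingHom.pi f) := by
  classical
  have := Fintype.ofFinite κ
  have separate (k : κ) (s : Finset κ) (hk : k ∉ s) : ∃ u, f k u = 1 ∧ ∀ j ∈ s, f j u = 0 := by
    induction s using Finset.induction_on with
    | empty => exact ⟨1, map_one _, by simp⟩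
    | insert a s _ ih =>
      rw [Finset.mem_insert, not_or] at hk
      obtain ⟨u, hu, hus⟩ := ih hk.2
      obtain ⟨v, hva, hv⟩ := exists_mem_apply_eq_one (hf k) (hker a k (Ne.symm hk.1))
      refine ⟨u * v, by rw [map_mul, hu, hv, one_mul], Finset.forall_mem_insert _ _ _ |>.mpr ?_⟩
      exact ⟨by rw [map_mul, RingHom.mem_ker.mp hva, mul_zero],
        fun j hj => by rw [map_mul, hus j hj, zero_mul]⟩
  intro y
  choose u hu hu0 using fun k => separate k _ (Finset.notMem_erase k Finset.univ)
  choose x hx using fun k => hf k (y k)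
  refine ⟨∑ k, u k * x k, funext fun j => ?_⟩
  rw [RingHom.pi_apply, map_sum, Finset.sum_eq_single j, map_mul, hu, one_mul, hx]
  · intro k _ hkj
    rw [map_mul, hu0 k j (by simp [hkj.symm]), zero_mul]
  · simp

theorem exists_isUnit_mul_eq_mul_of_algEquiv {F ι : Type*} [Field F] [Fintype ι] [DecidableEq ι]
    (g : Matrix ι ι F ≃ₐ[F] Matrix ι ι F) :
    ∃ U, IsUnit U ∧ ∀ X, g X * U = U * X := by
  obtain ⟨L, hL⟩ := AlgEquiv.eq_linearEquivConjAlgEquiv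
    ((toLinAlgEquiv'.symm.trans g).trans toLinAlgEquiv')
  refine ⟨toLinAlgEquiv'.symm L.toLinearMap,
    (LinearMap.GeneralLinearGroup.ofLinearEquiv L).isUnit.map toLinAlgEquiv'.symm, fun X => ?_⟩
  apply toLinAlgEquiv'.injective
  have hX := AlgEquiv.congr_fun hL (toLinAlgEquiv' X)
  simp only [AlgEquiv.trans_apply, AlgEquiv.symm_apply_apply, LinearEquiv.conjAlgEquiv_apply] at hX
  rw [map_mul, map_mul, AlgEquiv.apply_symm_apply, hX]
  ext v
  simp

theorem exists_algHom_apply_eq {F T A B : Type*} [CommSemiring F] [Ring T] [Ring A] [Ring B]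
    [Algebra F T] [Algebra F A] [Algebra F B] {f : T →ₐ[F] A} {h : T →ₐ[F] B}
    (hf : Function.Surjective f) (hker : RingHom.ker f ≤ RingHom.ker h) :
    ∃ g : A →ₐ[F] B, ∀ x, g (f x) = h x := by
  let g := Ideal.Quotient.liftₐ (RingHom.ker f) h fun _ hx => RingHom.mem_ker.mp (hker hx)
  let π := Ideal.quotientKerAlgEquivOfSurjective hf
  refine ⟨g.comp π.symm.toAlgHom, fun x => ?_⟩
  have hx : π.symm (f x) = Ideal.Quotient.mkₐ F (RingHom.ker f) x := π.symm_apply_eq.mpr rfl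
  calc g (π.symm (f x)) = (g.comp (Ideal.Quotient.mkₐ F _)) x := congrArg g hx
    _ = h x := by rw [Ideal.Quotient.liftₐ_comp]

theorem exists_isUnit_mul_eq_mul_of_ker_le {F T ι : Type*} [Field F] [Ring T] [Algebra F T]
    [Fintype ι] [DecidableEq ι] {f h : T →ₐ[F] Matrix ι ι F} (hf : Function.Surjective f)
    (hker : RingHom.ker f ≤ RingHom.ker h) :
    ∃ U, IsUnit U ∧ ∀ x, h x * U = U * f x := by
  rcases isEmpty_or_nonempty ι with hι | hι
  · exact ⟨1, isUnit_one, fun x => Subsingleton.elim _ _⟩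
  obtain ⟨g, hg⟩ := exists_algHom_apply_eq hf hker
  have hinj : Function.Injective g := RingHom.injective g.toRingHom
  have hsurj : Function.Surjective g :=
    (LinearMap.injective_iff_surjective (f := g.toLinearMap)).mp hinj
  obtain ⟨U, hU, hUg⟩ :=
    exists_isUnit_mul_eq_mul_of_algEquiv (AlgEquiv.ofBijective g ⟨hinj, hsurj⟩)
  exact ⟨U, hU, fun x => by rw [← hg]; exact hUg (f x)⟩

theorem exists_eq_smul_one_of_forall_commute {F ι : Type*} [Field F] [Fintype ι] [DecidableEq ι]
    {Z : Matrix ι ι F} (hZ : ∀ X, Commute X Z) : ∃ c : F, Z = c • 1 := by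
  obtain ⟨c, hc⟩ := mem_range_scalar_of_commute_single fun i j _ => hZ (single i j 1)
  exact ⟨c, by rw [← hc, scalar_apply, smul_one_eq_diagonal]⟩

theorem exists_surjective_algHom_matrix (F T : Type*) [Field F] [IsAlgClosed F] [Ring T]
    [Algebra F T] [FiniteDimensional F T] [Nontrivial T] :
    ∃ (N : ℕ) (_ : NeZero N) (f : T →ₐ[F] Matrix (Fin N) (Fin N) F), Function.Surjective f := by
  have := IsArtinianRing.of_finite F T
  let R := T ⧸ Ring.jacobson T
  let π := Ideal.Quotient.mkₐ F (Ring.jacobson T)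
  have hπ : Function.Surjective π := Ideal.Quotient.mkₐ_surjective F _
  have : IsSemisimpleRing R := IsSemiprimaryRing.isSemisimpleRing
  have : FiniteDimensional F R := FiniteDimensional.of_surjective π.toLinearMap hπ
  have : Nontrivial R := Ideal.Quotient.nontrivial_iff.mpr (Ring.jacobson_lt_top (R := T)).ne
  obtain ⟨n, d, hd, ⟨e⟩⟩ := IsSemisimpleRing.exists_algEquiv_pi_matrix_of_isAlgClosed F R
  obtain ⟨k⟩ : Nonempty (Fin n) := by
    by_contra hn
    rw [not_nonempty_iff] at hn
    exact not_subsingleton R e.toEquiv.subsingleton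
  exact ⟨d k, hd k, (Pi.evalAlgHom F _ k).comp (e.toAlgHom.comp π),
    (Function.surjective_eval k).comp (e.surjective.comp hπ)⟩

section DualRep

variable {F T ι : Type*} [Field F] [Ring T] [Algebra F T] [Fintype ι] [DecidableEq ι]

/-- The square of an algebra antiendomorphism. -/
def antiSquare (θ : T →ₐ[F] Tᵐᵒᵖ) : T →ₐ[F] T :=
  (AlgHom.opComm θ).comp θ

/-- The dual `x ↦ (f (θ x))ᵀ` of a matrix representation `f` with respect to an
antiendomorphism `θ`. -/
def dualRep (θ : T →ₐ[F] Tᵐᵒᵖ) (f : T →ₐ[F] Matrix ι ι F) : T →ₐ[F] Matrix ι ι F :=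
  (transposeAlgEquiv ι F F).symm.toAlgHom.comp (AlgHom.opComm.symm (f.comp (AlgHom.opComm θ)))

/-- `T` has no proper nonzero two-sided ideals stable under the antiendomorphism `θ`. -/
def IsAntiSimple (θ : T →ₐ[F] Tᵐᵒᵖ) : Prop :=
  ∀ I : Ideal T, I.IsTwoSided → (∀ x ∈ I, (θ x).unop ∈ I) → I = ⊥ ∨ I = ⊤

variable {θ : T →ₐ[F] Tᵐᵒᵖ} {f : T →ₐ[F] Matrix ι ι F}

theorem mem_ker_dualRep {x : T} :
    x ∈ RingHom.ker (dualRep θ f) ↔ (θ x).unop ∈ RingHom.ker f :=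
  transpose_eq_zero

theorem ker_iterate_dualRep_mono {κ : Type*} [Fintype κ] [DecidableEq κ]
    {h : T →ₐ[F] Matrix κ κ F} (hfh : RingHom.ker f ≤ RingHom.ker h) (k : ℕ) :
    RingHom.ker ((dualRep θ)^[k] f) ≤ RingHom.ker ((dualRep θ)^[k] h) := by
  induction k with
  | zero => exact hfh
  | succ k ih =>
    rw [Function.iterate_succ_apply', Function.iterate_succ_apply']
    exact fun x hx => mem_ker_dualRep.mpr (ih (mem_ker_dualRep.mp hx))

theorem ker_le_ker_iterate_dualRep_mul {k : ℕ}
    (hk : RingHom.ker f ≤ RingHom.ker ((dualRep θ)^[k] f)) (l : ℕ) :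
    RingHom.ker f ≤ RingHom.ker ((dualRep θ)^[k * l] f) := by
  induction l with
  | zero => exact le_rfl
  | succ l ih =>
    rw [Nat.mul_succ, Function.iterate_add_apply]
    exact ih.trans (ker_iterate_dualRep_mono hk _)

theorem IsAntiSimple.eq_zero_of_iterate_dualRep_eq_zero [Nonempty ι] (hθ : IsAntiSimple θ) {k : ℕ}
    (hk : RingHom.ker f ≤ RingHom.ker ((dualRep θ)^[k] f)) (hk0 : 0 < k) {x : T}
    (hx : ∀ j < k, (dualRep θ)^[j] f x = 0) : x = 0 := by
  let I : Ideal T := ⨅ j : Fin k, RingHom.ker ((dualRep θ)^[j] f)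
  have hI {y : T} : y ∈ I ↔ ∀ j < k, (dualRep θ)^[j] f y = 0 := by
    simp only [I, Submodule.mem_iInf, RingHom.mem_ker, Fin.forall_iff]
  have hstable : ∀ y ∈ I, (θ y).unop ∈ I := fun y hy => hI.mpr fun j hj => by
    rw [← RingHom.mem_ker, ← mem_ker_dualRep, ← Function.iterate_succ_apply' (dualRep θ)]
    rcases Nat.lt_or_eq_of_le (Nat.succ_le_of_lt hj) with h | rfl
    · exact hI.mp hy _ h
    · exact hk (hI.mp hy 0 hk0)
  rcases hθ I inferInstance hstable with h | h
  · exact (Submodule.mem_bot T).mp (h ▸ hI.mpr hx)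
  · exact absurd (hI.mp (h ▸ Submodule.mem_top : (1 : T) ∈ I) 0 hk0) (by simp)

variable (hσ : ∀ x, antiSquare θ (antiSquare θ x) = x)
include hσ

theorem iterate_dualRep_four_mul (k : ℕ) : (dualRep θ)^[4 * k] f = f := by
  rw [Function.iterate_mul]
  exact Function.iterate_fixed (AlgHom.ext fun x => congrArg f (hσ x)) k

theorem iterate_dualRep_surjective (hf : Function.Surjective f) (k : ℕ) :
    Function.Surjective ((dualRep θ)^[k] f) := by
  induction k with
  | zero => exact hf
  | succ k ih =>
    rw [Function.iterate_succ_apply']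
    intro X
    obtain ⟨x, hx⟩ := ih Xᵀ
    refine ⟨(θ (antiSquare θ x)).unop, ?_⟩
    change ((dualRep θ)^[k] f (antiSquare θ (antiSquare θ x)))ᵀ = X
    rw [hσ, hx, transpose_transpose]

theorem ker_le_ker_iterate_dualRep_of_three_mul {k : ℕ}
    (hk : RingHom.ker f ≤ RingHom.ker ((dualRep θ)^[3 * k] f)) :
    RingHom.ker f ≤ RingHom.ker ((dualRep θ)^[k] f) := by
  have h := ker_le_ker_iterate_dualRep_mul hk 3
  rwa [show 3 * k * 3 = k + 4 * (2 * k) by ring, Function.iterate_add_apply,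
    iterate_dualRep_four_mul hσ] at h

theorem ker_le_ker_iterate_dualRep_of_le {j l : ℕ}
    (h : RingHom.ker ((dualRep θ)^[j] f) ≤ RingHom.ker ((dualRep θ)^[l] f)) :
    RingHom.ker f ≤ RingHom.ker ((dualRep θ)^[3 * j + l] f) := by
  have h' := ker_iterate_dualRep_mono (θ := θ) h (3 * j)
  rwa [← Function.iterate_add_apply, ← Function.iterate_add_apply,
    show 3 * j + j = 4 * j by ring, iterate_dualRep_four_mul hσ] at h'

theorem not_ker_iterate_dualRep_le {k : ℕ}
    (hmin : ∀ j, 0 < j → j < k → ¬RingHom.ker f ≤ RingHom.ker ((dualRep θ)^[j] f))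
    {j l : ℕ} (hj : j < k) (hl : l < k) (hjl : j ≠ l) :
    ¬RingHom.ker ((dualRep θ)^[j] f) ≤ RingHom.ker ((dualRep θ)^[l] f) := by
  intro h
  have h' := ker_le_ker_iterate_dualRep_of_le hσ h
  rcases lt_or_gt_of_ne hjl with hlt | hlt
  · rw [show 3 * j + l = l - j + 4 * j by omega, Function.iterate_add_apply,
      iterate_dualRep_four_mul hσ] at h'
    exact hmin (l - j) (by omega) (by omega) h'
  · rw [show 3 * j + l = 3 * (j - l) + 4 * l by omega, Function.iterate_add_apply,
      iterate_dualRep_four_mul hσ] at h'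
    exact hmin (j - l) (by omega) (by omega) (ker_le_ker_iterate_dualRep_of_three_mul hσ h')

theorem IsAntiSimple.bijective_iterate_dualRep [Nonempty ι] (hθ : IsAntiSimple θ)
    (hf : Function.Surjective f) {k : ℕ} (hk0 : 0 < k)
    (hk : RingHom.ker f ≤ RingHom.ker ((dualRep θ)^[k] f))
    (hmin : ∀ j, 0 < j → j < k → ¬RingHom.ker f ≤ RingHom.ker ((dualRep θ)^[j] f)) :
    Function.Bijective fun x (j : Fin k) => (dualRep θ)^[j] f x := by
  let g (j : Fin k) : T →+* Matrix ι ι F := (dualRep θ)^[j] f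
  refine ⟨(injective_iff_map_eq_zero (RingHom.pi g)).mpr fun x hx => ?_, ?_⟩
  · exact hθ.eq_zero_of_iterate_dualRep_eq_zero hk hk0 fun j hj => congrFun hx ⟨j, hj⟩
  · exact pi_surjective (f := g) (fun j => iterate_dualRep_surjective hσ hf j) fun j l hjl =>
      not_ker_iterate_dualRep_le hσ hmin j.2 l.2 (Fin.val_ne_of_ne hjl)

end DualRep

section Twist

theorem parity_cases (p : ZMod 2) : p = 0 ∨ p = 1 := by
  decide +revert

theorem neg_eq_self_iff_of_two_ne_zero {F M : Type*} [Field F] [AddCommGroup M] [Module F M]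
    (h2 : (2 : F) ≠ 0) {y : M} : -y = y ↔ y = 0 := by
  rw [neg_eq_iff_add_eq_zero, ← two_smul F, smul_eq_zero_iff_right h2]

variable {F T : Type*} [Field F] [Ring T] [Algebra F T] {S : ZMod 2 → Submodule F T}

theorem isCompl_of_isSuperGrading (hS : IsSuperGrading F S) : IsCompl (S 0) (S 1) :=
  hS.internal.isCompl zero_ne_one (Set.eq_univ_of_forall parity_cases).symm

theorem homogeneous_induction (hS : IsSuperGrading F S) {P : T → Prop}
    (mem : ∀ p, ∀ x ∈ S p, P x) (add : ∀ x y, P x → P y → P (x + y)) (x : T) : P x :=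
  Submodule.iSup_induction (motive := P) S (hS.internal.submodule_iSup_eq_top ▸ Submodule.mem_top)
    mem (mem 0 0 (S 0).zero_mem) add

theorem one_mem_of_isSuperGrading (hS : IsSuperGrading F S) : (1 : T) ∈ S 0 := by
  have hcompl := isCompl_of_isSuperGrading hS
  obtain ⟨a, ha, b, hb, hab⟩ := Submodule.mem_sup.mp
    (hcompl.sup_eq_top ▸ Submodule.mem_top : (1 : T) ∈ S 0 ⊔ S 1)
  have hab1 : a * b ∈ S 1 := zero_add (1 : ZMod 2) ▸ hS.mul_mem ha hb
  have hab0 : a * b ∈ S 0 := by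
    rw [show a * b = a - a * a by rw [← mul_one_sub, ← hab, add_sub_cancel_left]]
    exact (S 0).sub_mem ha (hS.mul_mem ha ha)
  have hbb : b = b * b := by
    rw [← sub_eq_zero, ← one_sub_mul, ← hab, add_sub_cancel_right]
    exact Submodule.disjoint_def.mp hcompl.disjoint _ hab0 hab1
  have hb0 : b ∈ S 0 := hbb ▸ hS.mul_mem hb hb
  rw [← hab]
  exact (S 0).add_mem ha hb0

/-- `θ` is the antiendomorphism `x₀ + x₁ ↦ φ x₀ + i • φ x₁` attached to the superinvolution `φ`
and a square root `i` of `-1`. -/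
structure IsTwist (S : ZMod 2 → Submodule F T) (φ : T →ₗ[F] T) (i : F) (θ : T →ₐ[F] Tᵐᵒᵖ) :
    Prop where
  even : ∀ x ∈ S 0, (θ x).unop = φ x
  odd : ∀ x ∈ S 1, (θ x).unop = i • φ x

variable {φ : T →ₗ[F] T} {i : F} {θ : T →ₐ[F] Tᵐᵒᵖ}

theorem exists_isTwist (hS : IsSuperGrading F S) (hφ : IsSuperinvolution F S φ)
    (hi : i ^ 2 = -1) : ∃ θ, IsTwist S φ i θ := by
  let L : T →ₗ[F] T := LinearMap.ofIsCompl (isCompl_of_isSuperGrading hS)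
    (φ ∘ₗ (S 0).subtype) (i • φ ∘ₗ (S 1).subtype)
  have even (x) (hx : x ∈ S 0) : L x = φ x := LinearMap.ofIsCompl_apply_left _ ⟨x, hx⟩
  have odd (x) (hx : x ∈ S 1) : L x = i • φ x := LinearMap.ofIsCompl_apply_right _ ⟨x, hx⟩
  have hone : L 1 = 1 := by
    have h1 := one_mem_of_isSuperGrading hS
    have h := hφ.anti (hφ.graded 0 1 h1) h1
    simp only [superSign, hφ.invol, mul_one, one_smul, zero_ne_one, false_and, if_false] at h
    rw [even 1 h1, ← h]
  have hmul (x y : T) : L (x * y) = L y * L x := by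
    induction x using homogeneous_induction hS with
    | add a b ha hb => simp only [add_mul, mul_add, map_add, ha, hb]
    | mem p x hx =>
      induction y using homogeneous_induction hS with
      | add a b ha hb => simp only [add_mul, mul_add, map_add, ha, hb]
      | mem q y hy =>
        have hxy := hS.mul_mem hx hy
        have hanti := hφ.anti hx hy
        rcases parity_cases p with rfl | rfl <;> rcases parity_cases q with rfl | rfl
        · rw [even _ hxy, even x hx, even y hy, hanti]
          simp [superSign]
        · rw [odd _ hxy, even x hx, odd y hy, hanti]
          simp [superSign]
        · rw [odd _ hxy, odd x hx, even y hy, hanti]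
          simp [superSign]
        · rw [even _ hxy, odd x hx, odd y hy, hanti, smul_mul_smul_comm, ← sq, hi]
          simp [superSign]
  exact ⟨AlgHom.ofLinearMap ((MulOpposite.opLinearEquiv F).toLinearMap ∘ₗ L)
    (congrArg MulOpposite.op hone) fun x y => congrArg MulOpposite.op (hmul x y), ⟨even, odd⟩⟩

variable (hφ : IsSuperinvolution F S φ) (hi : i ^ 2 = -1) (hθ : IsTwist S φ i θ)
include hφ hi hθ

theorem antiSquare_apply_of_mem {p : ZMod 2} {x : T} (hx : x ∈ S p) :
    antiSquare θ x = superSign F 1 p • x := by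
  change (θ (θ x).unop).unop = _
  rcases parity_cases p with rfl | rfl
  · rw [hθ.even x hx, hθ.even _ (hφ.graded 0 x hx), hφ.invol]
    simp [superSign]
  · rw [hθ.odd x hx, map_smul, MulOpposite.unop_smul, hθ.odd _ (hφ.graded 1 x hx), hφ.invol,
      smul_smul, ← sq, hi]
    simp [superSign]

theorem antiSquare_antiSquare (hS : IsSuperGrading F S) (x : T) :
    antiSquare θ (antiSquare θ x) = x := by
  induction x using homogeneous_induction hS with
  | add a b ha hb => simp only [map_add, ha, hb]
  | mem p x hx =>
    rw [antiSquare_apply_of_mem hφ hi hθ hx, map_smul, antiSquare_apply_of_mem hφ hi hθ hx,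
      smul_smul]
    rcases parity_cases p with rfl | rfl <;> simp [superSign]

theorem mem_iff_antiSquare_apply (hS : IsSuperGrading F S) (h2 : (2 : F) ≠ 0) (p : ZMod 2)
    (x : T) : x ∈ S p ↔ antiSquare θ x = superSign F 1 p • x := by
  refine ⟨antiSquare_apply_of_mem hφ hi hθ, fun hx => ?_⟩
  obtain ⟨a, ha, b, hb, rfl⟩ := Submodule.mem_sup.mp
    ((isCompl_of_isSuperGrading hS).sup_eq_top ▸ Submodule.mem_top : x ∈ S 0 ⊔ S 1)
  rw [map_add, antiSquare_apply_of_mem hφ hi hθ ha, antiSquare_apply_of_mem hφ hi hθ hb] at hx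
  rcases parity_cases p with rfl | rfl <;>
    simp only [superSign, smul_add, true_and, if_true, zero_ne_one, if_false, one_smul, neg_smul,
      add_right_inj, add_left_inj] at hx
  · rw [(neg_eq_self_iff_of_two_ne_zero h2).mp hx, add_zero]
    exact ha
  · rw [(neg_eq_self_iff_of_two_ne_zero h2).mp hx.symm, zero_add]
    exact hb

theorem isAntiSimple_of_isTwist (hS : IsSuperGrading F S) (h2 : (2 : F) ≠ 0)
    (hsimple : ∀ I : Submodule F T,
      (∀ x ∈ I, ∀ r : T, r * x ∈ I ∧ x * r ∈ I) → I = (I ⊓ S 0) ⊔ (I ⊓ S 1) →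
      (∀ x ∈ I, φ x ∈ I) → I = ⊥ ∨ I = ⊤) : IsAntiSimple θ := by
  intro I hI hθI
  let J := I.restrictScalars F
  have hJ : J = (J ⊓ S 0) ⊔ (J ⊓ S 1) := by
    refine le_antisymm (fun x hx => ?_) (sup_le inf_le_left inf_le_left)
    obtain ⟨a, ha, b, hb, rfl⟩ := Submodule.mem_sup.mp
      ((isCompl_of_isSuperGrading hS).sup_eq_top ▸ Submodule.mem_top : x ∈ S 0 ⊔ S 1)
    have hσ : a - b ∈ J := by
      have h : antiSquare θ (a + b) ∈ J := hθI _ (hθI _ hx)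
      rw [map_add, antiSquare_apply_of_mem hφ hi hθ ha, antiSquare_apply_of_mem hφ hi hθ hb] at h
      simpa [superSign, sub_eq_add_neg] using h
    have ha' : a ∈ J := by
      have h := J.smul_mem (2⁻¹ : F) (J.add_mem hx hσ)
      rwa [show a + b + (a - b) = (2 : F) • a by rw [two_smul]; abel, inv_smul_smul₀ h2] at h
    have hb' : b ∈ J := by simpa using J.sub_mem hx ha'
    exact Submodule.add_mem_sup ⟨ha', ha⟩ ⟨hb', hb⟩
  have hφJ (x) (hx : x ∈ J) : φ x ∈ J := by
    rw [hJ] at hx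
    obtain ⟨a, ⟨haJ, ha⟩, b, ⟨hbJ, hb⟩, rfl⟩ := Submodule.mem_sup.mp hx
    have hi0 : i ≠ 0 := by rintro rfl; norm_num at hi
    have hφb : i • φ b ∈ J := hθ.odd b hb ▸ hθI b hbJ
    rw [map_add]
    exact J.add_mem (hθ.even a ha ▸ hθI a haJ) ((J.smul_mem_iff hi0).mp hφb)
  refine (hsimple J (fun x hx r => ⟨I.mul_mem_left r hx, I.mul_mem_right r hx⟩) hJ hφJ).imp ?_ ?_
  · exact (Submodule.restrictScalars_eq_bot_iff F T T).mp
  · exact (Submodule.restrictScalars_eq_top_iff F T T).mp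

end Twist

section OddScale

variable {F n m : Type*} [Field F] [DecidableEq n] [DecidableEq m]

/-- The block scalar matrix `diag(1, c)`. For `c = -1`, conjugation by it is the parity
automorphism of the matrix superalgebra. -/
def oddScale (c : F) : Matrix (n ⊕ m) (n ⊕ m) F :=
  fromBlocks 1 0 0 (c • 1)

theorem oddScale_one : (oddScale 1 : Matrix (n ⊕ m) (n ⊕ m) F) = 1 := by
  rw [oddScale, one_smul, fromBlocks_one]

theorem transpose_oddScale (c : F) : (oddScale c : Matrix (n ⊕ m) (n ⊕ m) F)ᵀ = oddScale c := by
  simp [oddScale, fromBlocks_transpose]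

variable [Fintype n] [Fintype m]

theorem oddScale_mul_oddScale (a b : F) :
    (oddScale a * oddScale b : Matrix (n ⊕ m) (n ⊕ m) F) = oddScale (a * b) := by
  simp [oddScale, fromBlocks_multiply, smul_smul, mul_comm]

theorem oddScale_neg_one_mul_self :
    (oddScale (-1) * oddScale (-1) : Matrix (n ⊕ m) (n ⊕ m) F) = 1 := by
  rw [oddScale_mul_oddScale, neg_mul_neg, one_mul, oddScale_one]

theorem oddScale_mul_oddScale_neg {j : F} (hj : j ^ 2 = -1) :
    (oddScale j * oddScale (-j) : Matrix (n ⊕ m) (n ⊕ m) F) = 1 := by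
  rw [oddScale_mul_oddScale, mul_neg, ← sq, hj, neg_neg, oddScale_one]

theorem oddScale_neg_mul_oddScale {j : F} (hj : j ^ 2 = -1) :
    (oddScale (-j) * oddScale j : Matrix (n ⊕ m) (n ⊕ m) F) = 1 := by
  simpa using oddScale_mul_oddScale_neg (j := -j) ((neg_sq j).trans hj)

theorem oddScale_mul_fromBlocks_mul_oddScale (a b : F) (A : Matrix n n F) (B : Matrix n m F)
    (C : Matrix m n F) (D : Matrix m m F) :
    oddScale a * fromBlocks A B C D * oddScale b =
      fromBlocks A (b • B) (a • C) ((a * b) • D) := by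
  simp [oddScale, fromBlocks_multiply, smul_smul, mul_comm]

end OddScale

section MatSuper

variable {F : Type*} [Field F] {n m : ℕ} {A : Matrix (Fin n) (Fin n) F}
  {B : Matrix (Fin n) (Fin m) F} {C : Matrix (Fin m) (Fin n) F} {D : Matrix (Fin m) (Fin m) F}

theorem fromBlocks_mem_matSuper_zero_iff :
    fromBlocks A B C D ∈ matSuper F n m 0 ↔ B = 0 ∧ C = 0 := by
  simp [matSuper, parSuper, matPar, ← Matrix.ext_iff, CharTwo.add_self_eq_zero]

theorem fromBlocks_mem_matSuper_one_iff :
    fromBlocks A B C D ∈ matSuper F n m 1 ↔ A = 0 ∧ D = 0 := by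
  simp [matSuper, parSuper, matPar, ← Matrix.ext_iff]

theorem mem_matSuper_iff (h2 : (2 : F) ≠ 0) (p : ZMod 2)
    (X : Matrix (Fin n ⊕ Fin m) (Fin n ⊕ Fin m) F) :
    X ∈ matSuper F n m p ↔ oddScale (-1) * X * oddScale (-1) = superSign F 1 p • X := by
  have neg_eq {ι κ : Type} (Y : Matrix ι κ F) := neg_eq_self_iff_of_two_ne_zero h2 (y := Y)
  rw [← fromBlocks_toBlocks X, oddScale_mul_fromBlocks_mul_oddScale]
  rcases parity_cases p with rfl | rfl
  · rw [fromBlocks_mem_matSuper_zero_iff]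
    simp [superSign, fromBlocks_inj, neg_eq]
  · rw [fromBlocks_mem_matSuper_one_iff]
    simp [superSign, fromBlocks_inj, fromBlocks_neg, ← neg_eq, eq_comm]

theorem tauL_apply {ι : Type*} (π : ι → ZMod 2) (X : Matrix ι ι F) (a b : ι) :
    tauL F π X a b = (if π a = 1 ∧ π b = 0 then -1 else 1) * X b a :=
  rfl

theorem tauInvL_apply {ι : Type*} (π : ι → ZMod 2) (X : Matrix ι ι F) (a b : ι) :
    tauInvL F π X a b = (if π a = 0 ∧ π b = 1 then -1 else 1) * X b a :=
  rfl

theorem tauL_fromBlocks :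
    tauL F matPar (fromBlocks A B C D) = fromBlocks Aᵀ Cᵀ (-Bᵀ) Dᵀ := by
  ext (a | a) (b | b) <;> simp [tauL_apply, matPar]

theorem tauInvL_tauL (X : Matrix (Fin n ⊕ Fin m) (Fin n ⊕ Fin m) F) :
    tauInvL F matPar (tauL F matPar X) = X := by
  rw [← fromBlocks_toBlocks X, tauL_fromBlocks]
  ext (a | a) (b | b) <;> simp [tauInvL_apply, matPar]

theorem tauL_of_mem_zero {j : F} (hj : j ^ 2 = -1) {X : Matrix (Fin n ⊕ Fin m) (Fin n ⊕ Fin m) F}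
    (hX : X ∈ matSuper F n m 0) : tauL F matPar X = oddScale j * Xᵀ * oddScale (-j) := by
  rw [← fromBlocks_toBlocks X] at hX ⊢
  obtain ⟨hB, hC⟩ := fromBlocks_mem_matSuper_zero_iff.mp hX
  rw [hB, hC, tauL_fromBlocks, fromBlocks_transpose, oddScale_mul_fromBlocks_mul_oddScale,
    mul_neg, ← sq, hj]
  simp

theorem tauL_of_mem_one {j : F} (hj : j ^ 2 = -1) {X : Matrix (Fin n ⊕ Fin m) (Fin n ⊕ Fin m) F}
    (hX : X ∈ matSuper F n m 1) : tauL F matPar X = j • (oddScale j * Xᵀ * oddScale (-j)) := by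
  rw [← fromBlocks_toBlocks X] at hX ⊢
  obtain ⟨hA, hD⟩ := fromBlocks_mem_matSuper_one_iff.mp hX
  rw [hA, hD, tauL_fromBlocks, fromBlocks_transpose, oddScale_mul_fromBlocks_mul_oddScale,
    fromBlocks_smul, smul_smul, smul_smul, mul_neg, ← sq, hj]
  simp

end MatSuper

section GradedRepresentation

variable {F T ι : Type*} [Field F] [IsAlgClosed F] [Ring T] [Algebra F T] [Fintype ι]
  [DecidableEq ι] [Nonempty ι]

theorem exists_mul_self_eq_one_mul_eq_mul {σ : T →ₐ[F] T} (hσ : ∀ x, σ (σ x) = x)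
    {f : T →ₐ[F] Matrix ι ι F} (hf : Function.Surjective f)
    (hker : RingHom.ker f ≤ RingHom.ker (f.comp σ)) :
    ∃ U, U * U = 1 ∧ ∀ x, f (σ x) * U = U * f x := by
  obtain ⟨U, hU, hUf⟩ := exists_isUnit_mul_eq_mul_of_ker_le hf hker
  simp only [AlgHom.comp_apply] at hUf
  have hcentral (X : Matrix ι ι F) : Commute X (U * U) := by
    obtain ⟨x, rfl⟩ := hf X
    calc f x * (U * U) = f (σ (σ x)) * U * U := by rw [hσ, mul_assoc]
      _ = U * U * f x := by rw [hUf, mul_assoc, hUf, ← mul_assoc]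
  obtain ⟨c, hc⟩ := exists_eq_smul_one_of_forall_commute hcentral
  have hc0 : c ≠ 0 := by
    rintro rfl
    exact (hU.mul hU).ne_zero (hc.trans (zero_smul F _))
  obtain ⟨d, hd⟩ := IsAlgClosed.exists_pow_nat_eq c⁻¹ (n := 2) two_pos
  refine ⟨d • U, ?_, fun x => ?_⟩
  · rw [smul_mul_smul_comm, ← sq, hd, hc, inv_smul_smul₀ hc0]
  · rw [mul_smul_comm, smul_mul_assoc, hUf]

theorem exists_surjective_algHom_conj_oddScale (h2 : (2 : F) ≠ 0) {σ : T →ₐ[F] T}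
    (hσ : ∀ x, σ (σ x) = x) {f : T →ₐ[F] Matrix ι ι F} (hf : Function.Surjective f)
    (hker : RingHom.ker f ≤ RingHom.ker (f.comp σ)) :
    ∃ (n m : ℕ) (_ : Nonempty (Fin n ⊕ Fin m))
      (g : T →ₐ[F] Matrix (Fin n ⊕ Fin m) (Fin n ⊕ Fin m) F), Function.Surjective g ∧
        RingHom.ker g = RingHom.ker f ∧ ∀ x, g (σ x) = oddScale (-1) * g x * oddScale (-1) := by
  obtain ⟨U, hUU, hU⟩ := exists_mul_self_eq_one_mul_eq_mul hσ hf hker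
  obtain ⟨n, m, e, he⟩ := exists_algEquiv_apply_eq_fromBlocks h2 hUU
  have heU : e U = oddScale (-1) := by rw [he, oddScale, neg_one_smul]
  have hne : Nonempty (Fin n ⊕ Fin m) := by
    have : Nontrivial (Matrix (Fin n ⊕ Fin m) (Fin n ⊕ Fin m) F) := e.symm.toEquiv.nontrivial
    by_contra h
    rw [not_nonempty_iff] at h
    exact not_subsingleton (Matrix (Fin n ⊕ Fin m) (Fin n ⊕ Fin m) F) inferInstance
  refine ⟨n, m, hne, e.toAlgHom.comp f, e.surjective.comp hf, ?_, fun x => ?_⟩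
  · ext x
    exact map_eq_zero_iff e e.injective
  · calc e (f (σ x)) = e (f (σ x) * U * U) := by rw [mul_assoc, hUU, mul_one]
      _ = oddScale (-1) * e (f x) * oddScale (-1) := by rw [hU, map_mul, map_mul, heU]

end GradedRepresentation

section FormRepresentation

/-- Conjugation `X ↦ Q * X * P` by a rectangular matrix `P` with two-sided inverse `Q`. -/
def conjAlgEquiv {F ι κ : Type*} [Field F] [Fintype ι] [DecidableEq ι] [Fintype κ] [DecidableEq κ]
    (P : Matrix ι κ F) (Q : Matrix κ ι F) (hPQ : P * Q = 1) (hQP : Q * P = 1) :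
    Matrix ι ι F ≃ₐ[F] Matrix κ κ F where
  toFun X := Q * X * P
  invFun Y := P * Y * Q
  left_inv X := by
    change P * (Q * X * P) * Q = X
    rw [Matrix.mul_assoc, Matrix.mul_assoc _ P, hPQ, Matrix.mul_one,
    ← Matrix.mul_assoc, hPQ, Matrix.one_mul]
  right_inv Y := by
    change Q * (P * Y * Q) * P = Y
    rw [Matrix.mul_assoc, Matrix.mul_assoc _ Q, hQP, Matrix.mul_one,
    ← Matrix.mul_assoc, hQP, Matrix.one_mul]
  map_mul' X Y := by
    rw [Matrix.mul_assoc (Q * X), ← Matrix.mul_assoc P, ← Matrix.mul_assoc P, hPQ, Matrix.one_mul]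
    simp only [Matrix.mul_assoc]
  map_add' X Y := by rw [Matrix.mul_add, Matrix.add_mul]
  commutes' c := by
    rw [Algebra.algebraMap_eq_smul_one, Algebra.algebraMap_eq_smul_one, Matrix.mul_smul,
      Matrix.smul_mul, Matrix.mul_one, hQP]

theorem exists_inverse_of_transpose_mul_mul_eq {F ι κ : Type*} [Field F] [Fintype ι]
    [DecidableEq ι] [Fintype κ] [DecidableEq κ] (hcard : Fintype.card ι = Fintype.card κ)
    {Ψ : Matrix ι ι F} {P : Matrix ι κ F} (h : IsUnit (Pᵀ * Ψ * P)) :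
    ∃ Q : Matrix κ ι F, P * Q = 1 ∧ Q * P = 1 := by
  obtain ⟨R, hR⟩ := h.exists_left_inv
  have hQP : R * Pᵀ * Ψ * P = 1 := by simpa only [Matrix.mul_assoc] using hR
  exact ⟨R * Pᵀ * Ψ, (mul_eq_one_comm_of_equiv (Fintype.equivOfCardEq hcard)).mpr hQP, hQP⟩

theorem exists_inverse_of_isUnit_fromBlocks {F n m : Type*} [Field F] [Fintype n] [DecidableEq n]
    [Fintype m] [DecidableEq m] {B : Matrix n m F} {C : Matrix m n F}
    (h : IsUnit (fromBlocks 0 B C 0)) : ∃ Z : Matrix m n F, B * Z = 1 ∧ Z * B = 1 := by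
  obtain ⟨R, hR⟩ := h.exists_right_inv
  have hR' := mul_eq_one_comm.mp hR
  rw [← fromBlocks_toBlocks R, fromBlocks_multiply, ← fromBlocks_one, fromBlocks_inj] at hR hR'
  exact ⟨R.toBlocks₂₁, by simpa using hR.1, by simpa using hR'.2.2.2⟩

variable {F T : Type*} [Field F] [Ring T] [Algebra F T] {θ : T →ₐ[F] Tᵐᵒᵖ}

/-- Under `e`, the square of `θ` is the parity automorphism of the matrix superalgebra and `θ` is
the adjoint with respect to the bilinear form with matrix `Ψ`. -/
structure IsFormRep {n m : Type*} [Fintype n] [Fintype m] [DecidableEq n] [DecidableEq m]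
    (θ : T →ₐ[F] Tᵐᵒᵖ) (e : T ≃ₐ[F] Matrix (n ⊕ m) (n ⊕ m) F) (Ψ : Matrix (n ⊕ m) (n ⊕ m) F) :
    Prop where
  parity : ∀ x, e (antiSquare θ x) = oddScale (-1) * e x * oddScale (-1)
  form : ∀ x, Ψ * e (θ x).unop = (e x)ᵀ * Ψ

section

variable {n m : Type*} [Fintype n] [Fintype m] [DecidableEq n] [DecidableEq m]
  {e : T ≃ₐ[F] Matrix (n ⊕ m) (n ⊕ m) F} {Ψ : Matrix (n ⊕ m) (n ⊕ m) F}

theorem IsFormRep.exists_congr {n' m' : Type*} [Fintype n'] [Fintype m'] [DecidableEq n']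
    [DecidableEq m'] (h : IsFormRep θ e Ψ)
    (hcard : Fintype.card (n ⊕ m) = Fintype.card (n' ⊕ m')) {P₁ : Matrix n n' F}
    {P₂ : Matrix m m' F} {Ψ' : Matrix (n' ⊕ m') (n' ⊕ m') F} (hunit : IsUnit Ψ')
    (hP : (fromBlocks P₁ 0 0 P₂)ᵀ * Ψ * fromBlocks P₁ 0 0 P₂ = Ψ') :
    ∃ e' : T ≃ₐ[F] Matrix (n' ⊕ m') (n' ⊕ m') F, IsFormRep θ e' Ψ' := by
  subst hP
  obtain ⟨Q, hPQ, hQP⟩ := exists_inverse_of_transpose_mul_mul_eq hcard hunit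
  set P := fromBlocks P₁ 0 0 P₂
  let J : Matrix (n ⊕ m) (n ⊕ m) F := oddScale (-1)
  let J' : Matrix (n' ⊕ m') (n' ⊕ m') F := oddScale (-1)
  have hJP : J * P = P * J' := by simp [J, J', P, oddScale, fromBlocks_multiply]
  have hQJ : Q * J = J' * Q := by
    calc Q * J = Q * (J * P) * Q := by
          rw [Matrix.mul_assoc, Matrix.mul_assoc, hPQ, Matrix.mul_one]
      _ = J' * Q := by rw [hJP, ← Matrix.mul_assoc, hQP, Matrix.one_mul]
  refine ⟨e.trans (conjAlgEquiv P Q hPQ hQP), fun x => ?_, fun x => ?_⟩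
  · change Q * e (antiSquare θ x) * P = J' * (Q * e x * P) * J'
    calc Q * e (antiSquare θ x) * P = Q * (J * e x * J) * P := by rw [h.parity]
      _ = Q * J * e x * (J * P) := by simp only [Matrix.mul_assoc]
      _ = J' * (Q * e x * P) * J' := by rw [hJP, hQJ]; simp only [Matrix.mul_assoc]
  · change Pᵀ * Ψ * P * (Q * e (θ x).unop * P) = (Q * e x * P)ᵀ * (Pᵀ * Ψ * P)
    have hPQt : Qᵀ * Pᵀ = 1 := by rw [← transpose_mul, hPQ, transpose_one]
    calc Pᵀ * Ψ * P * (Q * e (θ x).unop * P) = Pᵀ * (Ψ * (P * Q) * e (θ x).unop) * P := by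
          simp only [Matrix.mul_assoc]
      _ = Pᵀ * ((e x)ᵀ * (Qᵀ * Pᵀ) * Ψ) * P := by
          rw [hPQ, hPQt, Matrix.mul_one, Matrix.mul_one, h.form]
      _ = (Q * e x * P)ᵀ * (Pᵀ * Ψ * P) := by simp only [transpose_mul, Matrix.mul_assoc]

theorem reindexAlgEquiv_sumComm_oddScale_neg_one :
    reindexAlgEquiv F F (Equiv.sumComm n m) (oddScale (-1)) = -oddScale (-1) := by
  ext (a | a) (b | b) <;> simp [oddScale, one_apply]

theorem IsFormRep.swap (h : IsFormRep θ e Ψ) :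
    IsFormRep θ (e.trans (reindexAlgEquiv F F (Equiv.sumComm n m)))
      (reindexAlgEquiv F F (Equiv.sumComm n m) Ψ) where
  parity x := by
    rw [AlgEquiv.trans_apply, AlgEquiv.trans_apply, h.parity, map_mul, map_mul,
      reindexAlgEquiv_sumComm_oddScale_neg_one, neg_mul, neg_mul_neg]
  form x := by
    rw [AlgEquiv.trans_apply, AlgEquiv.trans_apply, ← map_mul, h.form, map_mul]
    rfl

theorem IsFormRep.exists_transpose_eq_smul (h : IsFormRep θ e Ψ) (hΨ : IsUnit Ψ) :
    ∃ c : F, Ψᵀ = c • (Ψ * oddScale (-1)) := by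
  obtain ⟨R, hR⟩ := hΨ.exists_right_inv
  let J : Matrix (n ⊕ m) (n ⊕ m) F := oddScale (-1)
  have hJ : J * J = 1 := oddScale_neg_one_mul_self
  have hΨJ : Ψ * J * (J * R * Ψᵀ) = Ψᵀ := by
    calc Ψ * J * (J * R * Ψᵀ) = Ψ * (J * J) * R * Ψᵀ := by simp only [mul_assoc]
      _ = Ψᵀ := by rw [hJ, mul_one, hR, one_mul]
  have hcancel : Function.Injective (Ψ * J * ·) :=
    (hΨ.mul (IsUnit.of_mul_eq_one J hJ)).mul_right_injective
  have hcomm (X : Matrix (n ⊕ m) (n ⊕ m) F) : Commute X (J * R * Ψᵀ) := by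
    obtain ⟨x, rfl⟩ := e.surjective X
    refine hcancel ?_
    calc Ψ * J * (e x * (J * R * Ψᵀ)) = Ψ * (J * e x * J) * R * Ψᵀ := by simp only [mul_assoc]
      _ = Ψ * e (θ (θ x).unop).unop * R * Ψᵀ := by rw [← h.parity]; rfl
      _ = (e (θ x).unop)ᵀ * Ψᵀ := by rw [h.form, mul_assoc _ Ψ, hR, mul_one]
      _ = Ψᵀ * e x := by rw [← transpose_mul, h.form, transpose_mul, transpose_transpose]
      _ = Ψ * J * (J * R * Ψᵀ * e x) := by rw [← mul_assoc, hΨJ]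
  obtain ⟨c, hc⟩ := exists_eq_smul_one_of_forall_commute hcomm
  exact ⟨c, by rw [← hΨJ, hc, mul_smul_comm, mul_one]⟩

theorem pow_four_eq_one_of_transpose_eq_smul [Nonempty (n ⊕ m)] (hΨ : IsUnit Ψ) {c : F}
    (hc : Ψᵀ = c • (Ψ * oddScale (-1))) : c ^ 4 = 1 := by
  let J : Matrix (n ⊕ m) (n ⊕ m) F := oddScale (-1)
  have hJ : J * J = 1 := oddScale_neg_one_mul_self
  have hsq : Ψ = c ^ 2 • (J * Ψ * J) := by
    calc Ψ = (c • (Ψ * J))ᵀ := by rw [← hc, transpose_transpose]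
      _ = c • (J * Ψᵀ) := by rw [transpose_smul, transpose_mul, transpose_oddScale]
      _ = c ^ 2 • (J * Ψ * J) := by rw [hc, mul_smul_comm, smul_smul, ← sq, mul_assoc]
  have hfour : c ^ 4 • Ψ = (1 : F) • Ψ := by
    calc c ^ 4 • Ψ = c ^ 4 • (J * J * Ψ * (J * J)) := by rw [hJ, one_mul, mul_one]
      _ = c ^ 2 • (J * (c ^ 2 • (J * Ψ * J)) * J) := by
          simp only [mul_smul_comm, smul_mul_assoc, smul_smul, mul_assoc, ← pow_add]
      _ = (1 : F) • Ψ := by rw [← hsq, ← hsq, one_smul]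
  exact smul_left_injective F hΨ.ne_zero hfour

theorem eq_or_eq_neg_of_pow_four_eq_one {i c : F} (hi : i ^ 2 = -1) (hc : c ^ 4 = 1) :
    (c = 1 ∨ c = -i) ∨ -c = 1 ∨ -c = -i := by
  have h : (c - 1) * (c + 1) * ((c - i) * (c + i)) = 0 := by
    linear_combination hc - (c ^ 2 - 1) * hi
  simp only [mul_eq_zero, sub_eq_zero, add_eq_zero_iff_eq_neg] at h
  rcases h with (rfl | rfl) | (rfl | rfl) <;> simp

theorem transpose_reindexAlgEquiv_sumComm {c : F} (hc : Ψᵀ = c • (Ψ * oddScale (-1))) :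
    (reindexAlgEquiv F F (Equiv.sumComm n m) Ψ)ᵀ =
      -c • (reindexAlgEquiv F F (Equiv.sumComm n m) Ψ * oddScale (-1)) := by
  calc (reindexAlgEquiv F F (Equiv.sumComm n m) Ψ)ᵀ
      = reindexAlgEquiv F F (Equiv.sumComm n m) (Ψᵀ) := rfl
    _ = _ := by
      rw [hc, map_smul, map_mul, reindexAlgEquiv_sumComm_oddScale_neg_one, mul_neg, smul_neg,
        neg_smul]

theorem exists_eq_fromBlocks_of_transpose_eq (h2 : (2 : F) ≠ 0)
    (hsymm : Ψᵀ = Ψ * oddScale (-1)) :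
    ∃ A D, Aᵀ = A ∧ Dᵀ = -D ∧ Ψ = fromBlocks A 0 0 D := by
  rw [← fromBlocks_toBlocks Ψ] at hsymm ⊢
  simp only [oddScale, fromBlocks_transpose, fromBlocks_multiply, fromBlocks_inj, Matrix.mul_zero,
    Matrix.mul_one, add_zero, zero_add, neg_smul, one_smul, Matrix.mul_neg] at hsymm
  obtain ⟨hA, hC, hB, hD⟩ := hsymm
  have hB0 : Ψ.toBlocks₁₂ = 0 := by
    rw [← neg_eq_self_iff_of_two_ne_zero h2, ← hC, ← hB, transpose_transpose]
  exact ⟨_, _, hA, hD, by rw [hB0, ← hB, hB0, transpose_zero]⟩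

theorem eq_zero_of_transpose_eq_smul {ι : Type*} (h2 : (2 : F) ≠ 0) {c : F} (hc : c ^ 2 = -1)
    {A : Matrix ι ι F} (hA : Aᵀ = c • A) : A = 0 := by
  rw [← neg_eq_self_iff_of_two_ne_zero h2, ← neg_one_smul F, ← hc, sq, mul_smul, ← hA,
    ← transpose_smul, ← hA, transpose_transpose]

theorem exists_eq_fromBlocks_of_transpose_eq_neg_smul (h2 : (2 : F) ≠ 0) {i : F} (hi : i ^ 2 = -1)
    (hskew : Ψᵀ = -i • (Ψ * oddScale (-1))) :
    ∃ B, Ψ = fromBlocks 0 B (i • Bᵀ) 0 := by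
  rw [← fromBlocks_toBlocks Ψ] at hskew ⊢
  simp only [oddScale, fromBlocks_transpose, fromBlocks_multiply, fromBlocks_smul, fromBlocks_neg,
    fromBlocks_inj,
    Matrix.mul_zero, Matrix.mul_one, add_zero, zero_add, neg_smul, one_smul, smul_neg,
    Matrix.mul_neg, neg_neg] at hskew
  obtain ⟨hA, -, hB, hD⟩ := hskew
  have hA0 := eq_zero_of_transpose_eq_smul h2 ((neg_sq i).trans hi) (hA.trans (neg_smul i _).symm)
  have hD0 := eq_zero_of_transpose_eq_smul h2 hi hD
  refine ⟨Ψ.toBlocks₁₂, ?_⟩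
  rw [hA0, hD0, hB, smul_neg, smul_smul, ← sq, hi, neg_one_smul, neg_neg]

theorem isUnit_stdQ (F : Type*) [Field F] (k : ℕ) : IsUnit (stdQ F k) := by
  rw [← isUnit_submatrix_equiv (finTwoMulEquiv k) (finTwoMulEquiv k), stdQ_submatrix_finTwoMulEquiv]
  exact IsUnit.of_mul_eq_one (fromBlocks 0 (-1) 1 0) (by simp [fromBlocks_multiply])

theorem isUnit_oddScale {i : F} (hi : i ^ 2 = -1) :
    IsUnit (oddScale i : Matrix (n ⊕ m) (n ⊕ m) F) :=
  IsUnit.of_mul_eq_one _ (oddScale_mul_oddScale_neg hi)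

theorem isUnit_fromBlocks_one_stdQ (k : ℕ) :
    IsUnit (fromBlocks 1 0 0 (stdQ F k) : Matrix (n ⊕ Fin (2 * k)) (n ⊕ Fin (2 * k)) F) := by
  rw [isUnit_fromBlocks_zero₂₁]
  exact ⟨isUnit_one, isUnit_stdQ F k⟩

theorem isUnit_fromBlocks_zero_one :
    IsUnit (fromBlocks 0 1 1 0 : Matrix (n ⊕ n) (n ⊕ n) F) :=
  IsUnit.of_mul_eq_one (fromBlocks 0 1 1 0) (by simp [fromBlocks_multiply])

theorem IsFormRep.exists_orthosymplectic [IsAlgClosed F] (h2 : (2 : F) ≠ 0) {i : F}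
    (hi : i ^ 2 = -1) (h : IsFormRep θ e Ψ) (hΨ : IsUnit Ψ) (hsymm : Ψᵀ = Ψ * oddScale (-1)) :
    ∃ (k : ℕ) (e' : T ≃ₐ[F] Matrix (n ⊕ Fin (2 * k)) (n ⊕ Fin (2 * k)) F),
      IsFormRep θ e' (oddScale i * fromBlocks 1 0 0 (stdQ F k)) := by
  obtain ⟨A, D, hA, hD, rfl⟩ := exists_eq_fromBlocks_of_transpose_eq h2 hsymm
  have hi0 : -i ≠ 0 := by rintro h0; norm_num [neg_eq_zero.mp h0] at hi
  rw [isUnit_fromBlocks_zero₂₁] at hΨ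
  obtain ⟨P₁, hP₁⟩ := exists_transpose_mul_mul_eq_one h2 hA hΨ.1
  obtain ⟨k, P₂, hk, hP₂⟩ := exists_transpose_mul_mul_eq_stdQ h2 (A := -i • D)
    (by rw [transpose_smul, hD, smul_neg]) (hΨ.2.smul (Units.mk0 (-i) hi0))
  refine ⟨k, h.exists_congr (by simp [hk]) ((isUnit_oddScale hi).mul (isUnit_fromBlocks_one_stdQ k))
    (P₁ := P₁) (P₂ := P₂) ?_⟩
  simp [oddScale, fromBlocks_transpose, fromBlocks_multiply, hP₁, ← hP₂, smul_smul, ← sq, hi]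

theorem IsFormRep.exists_transpose (h2 : (2 : F) ≠ 0) {i : F} (hi : i ^ 2 = -1)
    (h : IsFormRep θ e Ψ) (hΨ : IsUnit Ψ) (hskew : Ψᵀ = -i • (Ψ * oddScale (-1))) :
    ∃ e' : T ≃ₐ[F] Matrix (n ⊕ n) (n ⊕ n) F,
      IsFormRep θ e' (oddScale i * fromBlocks 0 1 1 0) := by
  obtain ⟨B, rfl⟩ := exists_eq_fromBlocks_of_transpose_eq_neg_smul h2 hi hskew
  obtain ⟨Z, hBZ, hZB⟩ := exists_inverse_of_isUnit_fromBlocks hΨ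
  have hcard := square_of_invertible B Z hBZ hZB
  refine h.exists_congr (by simp [hcard]) ((isUnit_oddScale hi).mul isUnit_fromBlocks_zero_one)
    (P₁ := 1) (P₂ := Z) ?_
  have hZBt : Zᵀ * Bᵀ = 1 := by rw [← transpose_mul, hBZ, transpose_one]
  simp [fromBlocks_transpose, fromBlocks_multiply, oddScale, hBZ, hZBt]

end

theorem IsAntiSimple.exists_isFormRep [IsAlgClosed F] {ι : Type*} [Fintype ι] [DecidableEq ι]
    [Nonempty ι] (h2 : (2 : F) ≠ 0) (hσ : ∀ x, antiSquare θ (antiSquare θ x) = x)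
    (hθ : IsAntiSimple θ) {f : T →ₐ[F] Matrix ι ι F} (hf : Function.Surjective f)
    (hker : RingHom.ker f ≤ RingHom.ker (dualRep θ f)) :
    ∃ (n m : ℕ) (e : T ≃ₐ[F] Matrix (Fin n ⊕ Fin m) (Fin n ⊕ Fin m) F)
      (Ψ : Matrix (Fin n ⊕ Fin m) (Fin n ⊕ Fin m) F),
      Nonempty (Fin n ⊕ Fin m) ∧ IsUnit Ψ ∧ IsFormRep θ e Ψ := by
  obtain ⟨n, m, hne, g, hg, hgf, hgσ⟩ := exists_surjective_algHom_conj_oddScale h2 hσ hf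
    (ker_le_ker_iterate_dualRep_mul (k := 1) hker 2)
  have hker' : RingHom.ker g ≤ RingHom.ker (dualRep θ g) :=
    hgf.le.trans (hker.trans (ker_iterate_dualRep_mono hgf.ge 1))
  have hinj : Function.Injective g := (injective_iff_map_eq_zero g).mpr fun x hx =>
    hθ.eq_zero_of_iterate_dualRep_eq_zero (k := 1) hker' one_pos fun j hj => by
      rwa [Nat.lt_one_iff.mp hj]
  obtain ⟨U, hU, hUg⟩ := exists_isUnit_mul_eq_mul_of_ker_le hg hker'
  refine ⟨n, m, AlgEquiv.ofBijective g ⟨hinj, hg⟩, Uᵀ, hne, (isUnit_transpose U).mpr hU, hgσ,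
    fun x => ?_⟩
  have h : (g (θ x).unop)ᵀ * U = U * g x := hUg x
  change Uᵀ * g (θ x).unop = (g x)ᵀ * Uᵀ
  rw [← transpose_transpose (g (θ x).unop), ← transpose_mul, h, transpose_mul]

theorem IsAntiSimple.exists_isFormRep_transpose_eq [IsAlgClosed F] {ι : Type*} [Fintype ι]
    [DecidableEq ι] [Nonempty ι] (h2 : (2 : F) ≠ 0) {i : F} (hi : i ^ 2 = -1)
    (hσ : ∀ x, antiSquare θ (antiSquare θ x) = x) (hθ : IsAntiSimple θ)
    {f : T →ₐ[F] Matrix ι ι F} (hf : Function.Surjective f)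
    (hker : RingHom.ker f ≤ RingHom.ker (dualRep θ f)) :
    ∃ (n m : ℕ) (e : T ≃ₐ[F] Matrix (Fin n ⊕ Fin m) (Fin n ⊕ Fin m) F)
      (Ψ : Matrix (Fin n ⊕ Fin m) (Fin n ⊕ Fin m) F), IsUnit Ψ ∧ IsFormRep θ e Ψ ∧
        (Ψᵀ = Ψ * oddScale (-1) ∨ Ψᵀ = -i • (Ψ * oddScale (-1))) := by
  obtain ⟨n, m, e, Ψ, hne, hΨ, h⟩ := hθ.exists_isFormRep h2 hσ hf hker
  obtain ⟨c, hc⟩ := h.exists_transpose_eq_smul hΨ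
  have hswap := transpose_reindexAlgEquiv_sumComm hc
  have hΨ' := hΨ.map (reindexAlgEquiv F F (Equiv.sumComm (Fin n) (Fin m)))
  rcases eq_or_eq_neg_of_pow_four_eq_one hi (pow_four_eq_one_of_transpose_eq_smul hΨ hc)
    with (rfl | rfl) | hc' | hc'
  · exact ⟨n, m, e, Ψ, hΨ, h, Or.inl (hc.trans (one_smul F _))⟩
  · exact ⟨n, m, e, Ψ, hΨ, h, Or.inr hc⟩
  · rw [hc', one_smul] at hswap
    exact ⟨m, n, _, _, hΨ', h.swap, Or.inl hswap⟩
  · rw [hc'] at hswap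
    exact ⟨m, n, _, _, hΨ', h.swap, Or.inr hswap⟩

section

variable {n m : ℕ} {e : T ≃ₐ[F] Matrix (Fin n ⊕ Fin m) (Fin n ⊕ Fin m) F}
  {Ψ Φ : Matrix (Fin n ⊕ Fin m) (Fin n ⊕ Fin m) F} {S : ZMod 2 → Submodule F T}
  {φ : T →ₗ[F] T} {i : F}

theorem IsFormRep.map_eq_matSuper (h : IsFormRep θ e Ψ) (hφ : IsSuperinvolution F S φ)
    (hi : i ^ 2 = -1) (hθ : IsTwist S φ i θ) (hS : IsSuperGrading F S) (h2 : (2 : F) ≠ 0)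
    (p : ZMod 2) : (S p).map e.toLinearMap = matSuper F n m p := by
  ext X
  obtain ⟨x, rfl⟩ := e.surjective X
  rw [mem_matSuper_iff h2, ← h.parity, ← map_smul, e.injective.eq_iff,
    ← mem_iff_antiSquare_apply hφ hi hθ hS h2]
  exact e.injective.mem_set_image

theorem IsFormRep.apply_eq_matStarL (h : IsFormRep θ e (oddScale i * Φ)) (hΦ : IsUnit Φ)
    (hi : i ^ 2 = -1) (hθ : IsTwist S φ i θ) (hS : IsSuperGrading F S)
    (hmap : ∀ p, (S p).map e.toLinearMap = matSuper F n m p) (x : T) :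
    e (φ x) = matStarL F Φ (e x) := by
  have hmem {p : ZMod 2} {x : T} (hx : x ∈ S p) : e x ∈ matSuper F n m p :=
    hmap p ▸ Submodule.mem_map_of_mem hx
  have hform (x : T) : Φ * e (θ x).unop = oddScale (-i) * (e x)ᵀ * oddScale (- -i) * Φ := by
    calc Φ * e (θ x).unop = oddScale (-i) * (oddScale i * Φ * e (θ x).unop) := by
          rw [← mul_assoc, ← mul_assoc, oddScale_neg_mul_oddScale hi, one_mul]
      _ = oddScale (-i) * (e x)ᵀ * oddScale (- -i) * Φ := by
          rw [h.form, neg_neg]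
          simp only [mul_assoc]
  induction x using homogeneous_induction hS with
  | add a b ha hb => simp only [map_add, ha, hb]
  | mem p x hx =>
    have hstar : Φ * e (φ x) = tauL F matPar (e x) * Φ := by
      have hi' : (-i) ^ 2 = -1 := (neg_sq i).trans hi
      rcases parity_cases p with rfl | rfl
      · rw [tauL_of_mem_zero hi' (hmem hx), ← hform, hθ.even x hx]
      · rw [tauL_of_mem_one hi' (hmem hx), smul_mul_assoc, ← hform, hθ.odd x hx, map_smul,
          mul_smul_comm, smul_smul, neg_mul, ← sq, hi, neg_neg, one_smul]
    change _ = Φ⁻¹ * tauL F matPar (e x) * Φ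
    rw [mul_assoc, ← hstar, ← mul_assoc, nonsing_inv_mul Φ ((isUnit_iff_isUnit_det Φ).mp hΦ),
      one_mul]

end

end FormRepresentation

section DualPair

variable {F T : Type*} [Field F] [Ring T] [Algebra F T] {θ : T →ₐ[F] Tᵐᵒᵖ} {i : F}

/-- `e` identifies `T` with a product of two copies of a matrix superalgebra: the square of `θ` is
the parity automorphism of the first factor, and the second factor is the dual of the first one,
rescaled by `i` so that it is related to it by the supertranspose. -/
structure IsDualPairRep {n m : Type*} [Fintype n] [Fintype m] [DecidableEq n] [DecidableEq m]
    (θ : T →ₐ[F] Tᵐᵒᵖ) (i : F)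
    (e : T ≃ₐ[F] Matrix (n ⊕ m) (n ⊕ m) F × Matrix (n ⊕ m) (n ⊕ m) F) : Prop where
  parity : ∀ x, (e (antiSquare θ x)).1 = oddScale (-1) * (e x).1 * oddScale (-1)
  dual : ∀ x, (e x).2 = oddScale i * (e (θ x).unop).1ᵀ * oddScale (-i)

theorem exists_isDualPairRep_of_bijective {n m : Type*} [Fintype n] [Fintype m] [DecidableEq n]
    [DecidableEq m] (hi : i ^ 2 = -1) {f : T →ₐ[F] Matrix (n ⊕ m) (n ⊕ m) F}
    (hf : Function.Bijective fun x (j : Fin 2) => (dualRep θ)^[j] f x)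
    (hparity : ∀ x, f (antiSquare θ x) = oddScale (-1) * f x * oddScale (-1)) :
    ∃ e, IsDualPairRep (n := n) (m := m) θ i e := by
  let e₂ := conjAlgEquiv (oddScale (-i)) (oddScale i)
    (oddScale_neg_mul_oddScale (n := n) (m := m) hi) (oddScale_mul_oddScale_neg hi)
  let ψ := f.prod (e₂.toAlgHom.comp (dualRep θ f))
  have hψ : Function.Bijective ψ :=
    ((Equiv.refl _).prodCongr e₂.toEquiv).bijective.comp ((piFinTwoEquiv _).bijective.comp hf)
  exact ⟨AlgEquiv.ofBijective ψ hψ, hparity, fun x => rfl⟩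

theorem IsAntiSimple.exists_isDualPairRep [IsAlgClosed F] {ι : Type*} [Fintype ι] [DecidableEq ι]
    [Nonempty ι] (hθ : IsAntiSimple θ) (h2 : (2 : F) ≠ 0) (hi : i ^ 2 = -1)
    (hσ : ∀ x, antiSquare θ (antiSquare θ x) = x) {f : T →ₐ[F] Matrix ι ι F}
    (hf : Function.Surjective f) (hker : ¬RingHom.ker f ≤ RingHom.ker (dualRep θ f))
    (hker₂ : RingHom.ker f ≤ RingHom.ker ((dualRep θ)^[2] f)) :
    ∃ (n m : ℕ) (e : T ≃ₐ[F] Matrix (Fin n ⊕ Fin m) (Fin n ⊕ Fin m) F ×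
      Matrix (Fin n ⊕ Fin m) (Fin n ⊕ Fin m) F), IsDualPairRep θ i e := by
  obtain ⟨n, m, hne, g, hg, hgf, hgσ⟩ := exists_surjective_algHom_conj_oddScale h2 hσ hf hker₂
  have hbij := hθ.bijective_iterate_dualRep hσ hg two_pos
    (hgf.le.trans (hker₂.trans (ker_iterate_dualRep_mono hgf.ge 2))) fun j hj hj2 => by
      obtain rfl : j = 1 := by omega
      exact fun h => hker (hgf.ge.trans (h.trans (ker_iterate_dualRep_mono hgf.le 1)))
  exact ⟨n, m, exists_isDualPairRep_of_bijective hi hbij hgσ⟩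

section

variable {n m : Type*} [Fintype n] [Fintype m] [DecidableEq n] [DecidableEq m]
  {e : T ≃ₐ[F] Matrix (n ⊕ m) (n ⊕ m) F × Matrix (n ⊕ m) (n ⊕ m) F}

theorem IsDualPairRep.parity_snd (h : IsDualPairRep θ i e) (x : T) :
    (e (antiSquare θ x)).2 = oddScale (-1) * (e x).2 * oddScale (-1) := by
  have hcomm (j : F) : (oddScale j * oddScale (-1) : Matrix (n ⊕ m) (n ⊕ m) F) =
      oddScale (-1) * oddScale j := by
    rw [oddScale_mul_oddScale, oddScale_mul_oddScale, mul_comm]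
  have hx : (e (θ (antiSquare θ x)).unop).1 =
      oddScale (-1) * (e (θ x).unop).1 * oddScale (-1) := h.parity (θ x).unop
  rw [h.dual, hx, h.dual, transpose_mul, transpose_mul, transpose_oddScale]
  simp only [mul_assoc]
  rw [← hcomm, ← mul_assoc, hcomm]
  simp only [mul_assoc]

end

variable {n m : ℕ} {e : T ≃ₐ[F] Matrix (Fin n ⊕ Fin m) (Fin n ⊕ Fin m) F ×
    Matrix (Fin n ⊕ Fin m) (Fin n ⊕ Fin m) F} {S : ZMod 2 → Submodule F T} {φ : T →ₗ[F] T}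

theorem IsDualPairRep.map_eq_prod_matSuper (h : IsDualPairRep θ i e)
    (hφ : IsSuperinvolution F S φ) (hi : i ^ 2 = -1) (hθ : IsTwist S φ i θ)
    (hS : IsSuperGrading F S) (h2 : (2 : F) ≠ 0) (p : ZMod 2) :
    (S p).map e.toLinearMap = (matSuper F n m p).prod (matSuper F n m p) := by
  ext X
  obtain ⟨x, rfl⟩ := e.surjective X
  rw [Submodule.mem_prod, mem_matSuper_iff h2, mem_matSuper_iff h2, ← h.parity, ← h.parity_snd,
    ← Prod.smul_fst, ← Prod.smul_snd, ← Prod.ext_iff, ← map_smul, e.injective.eq_iff,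
    ← mem_iff_antiSquare_apply hφ hi hθ hS h2]
  exact e.injective.mem_set_image

theorem IsDualPairRep.apply_eq (h : IsDualPairRep θ i e) (hφ : IsSuperinvolution F S φ)
    (hi : i ^ 2 = -1) (hθ : IsTwist S φ i θ) (hS : IsSuperGrading F S)
    (hmap : ∀ p, (S p).map e.toLinearMap = (matSuper F n m p).prod (matSuper F n m p)) (x : T) :
    e (φ x) = (tauInvL F matPar (e x).2, tauL F matPar (e x).1) := by
  have hsnd (x : T) : (e (φ x)).2 = tauL F matPar (e x).1 := by
    induction x using homogeneous_induction hS with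
    | add a b ha hb => simp only [map_add, Prod.fst_add, Prod.snd_add, ha, hb]
    | mem p x hx =>
      have hmem : e x ∈ (matSuper F n m p).prod (matSuper F n m p) :=
        hmap p ▸ Submodule.mem_map_of_mem hx
      have hφx := hφ.graded p x hx
      rw [h.dual]
      rcases parity_cases p with rfl | rfl
      · rw [hθ.even _ hφx, hφ.invol, tauL_of_mem_zero hi hmem.1]
      · rw [hθ.odd _ hφx, hφ.invol, tauL_of_mem_one hi hmem.1, map_smul, Prod.smul_fst,
          transpose_smul, mul_smul_comm, smul_mul_assoc]
  refine Prod.ext ?_ (hsnd x)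
  rw [← tauInvL_tauL (e (φ x)).1, ← hsnd, hφ.invol]

end DualPair

section Queer

variable {F : Type*} [Field F]

section

variable {n : Type*} [Fintype n] [DecidableEq n]

/-- The algebra homomorphism `(X, Y) ↦ [[A, B], [B, A]]`, where `A = (X + Y) / 2` and
`B = (X - Y) / 2`, identifying the direct sum of two matrix algebras with the queer superalgebra
`Q(n)`. -/
def queerHom (h2 : (2 : F) ≠ 0) :
    Matrix n n F × Matrix n n F →ₐ[F] Matrix (n ⊕ n) (n ⊕ n) F :=
  AlgHom.ofLinearMap
    { toFun := fun q => fromBlocks ((2⁻¹ : F) • (q.1 + q.2)) ((2⁻¹ : F) • (q.1 - q.2))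
        ((2⁻¹ : F) • (q.1 - q.2)) ((2⁻¹ : F) • (q.1 + q.2))
      map_add' := fun q r => by
        simp only [fromBlocks_add, fromBlocks_inj, ← smul_add, Prod.fst_add, Prod.snd_add]
        refine ⟨?_, ?_, ?_, ?_⟩ <;> congr 1 <;> abel
      map_smul' := fun c q => by
        simp only [fromBlocks_smul, Prod.smul_fst, Prod.smul_snd, RingHom.id_apply, smul_comm c,
          smul_add, smul_sub] }
    (by
      simp only [LinearMap.coe_mk, AddHom.coe_mk, Prod.fst_one, Prod.snd_one,
        ← two_smul F (1 : Matrix n n F), inv_smul_smul₀ h2, sub_self, smul_zero, fromBlocks_one])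
    (fun q r => by
      have hh : (2⁻¹ : F) = 2⁻¹ * 2⁻¹ * 2 := by field_simp
      simp only [LinearMap.coe_mk, AddHom.coe_mk, fromBlocks_multiply, fromBlocks_inj,
        smul_mul_smul_comm, ← smul_add, Prod.fst_mul, Prod.snd_mul, add_mul, mul_add, sub_mul,
        mul_sub]
      refine ⟨?_, ?_, ?_, ?_⟩ <;> (conv_lhs => rw [hh, ← smul_smul, two_smul]) <;> congr 1 <;> abel)

theorem queerHom_apply (h2 : (2 : F) ≠ 0) (X Y : Matrix n n F) :
    queerHom h2 (X, Y) = fromBlocks ((2⁻¹ : F) • (X + Y)) ((2⁻¹ : F) • (X - Y))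
      ((2⁻¹ : F) • (X - Y)) ((2⁻¹ : F) • (X + Y)) :=
  rfl

theorem queerHom_apply_self (h2 : (2 : F) ≠ 0) (X : Matrix n n F) :
    queerHom h2 (X, X) = fromBlocks X 0 0 X := by
  rw [queerHom_apply, ← two_smul F X, inv_smul_smul₀ h2, sub_self, smul_zero]

theorem queerHom_apply_neg (h2 : (2 : F) ≠ 0) (X : Matrix n n F) :
    queerHom h2 (X, -X) = fromBlocks 0 X X 0 := by
  rw [queerHom_apply, sub_neg_eq_add, ← two_smul F X, inv_smul_smul₀ h2, add_neg_cancel, smul_zero]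

theorem queerHom_add_sub (h2 : (2 : F) ≠ 0) (A B : Matrix n n F) :
    queerHom h2 (A + B, A - B) = fromBlocks A B B A := by
  rw [queerHom_apply, add_add_sub_cancel, add_sub_sub_cancel, ← two_smul F A, ← two_smul F B,
    inv_smul_smul₀ h2, inv_smul_smul₀ h2]

theorem queerHom_injective (h2 : (2 : F) ≠ 0) :
    Function.Injective (queerHom h2 : Matrix n n F × Matrix n n F → _) := by
  refine (injective_iff_map_eq_zero _).mpr fun ⟨X, Y⟩ h => ?_
  rw [queerHom_apply, ← fromBlocks_zero, fromBlocks_inj,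
    smul_eq_zero_iff_right (inv_ne_zero h2), smul_eq_zero_iff_right (inv_ne_zero h2)] at h
  have hYX : X = -Y := eq_neg_of_add_eq_zero_left h.1
  have hXY : X = Y := sub_eq_zero.mp h.2.1
  have hY : Y = 0 := (neg_eq_self_iff_of_two_ne_zero h2).mp (hYX.symm.trans hXY)
  rw [hXY, hY, Prod.mk_zero_zero]

theorem queerHom_apply_swap (h2 : (2 : F) ≠ 0) (q : Matrix n n F × Matrix n n F) (a b : n ⊕ n) :
    queerHom h2 q a.swap b.swap = queerHom h2 q a b := by
  rcases a with a | a <;> rcases b with b | b <;> rfl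

theorem exists_queerHom_eq (h2 : (2 : F) ≠ 0) {X : Matrix (n ⊕ n) (n ⊕ n) F}
    (hX : ∀ a b, X (Sum.swap a) (Sum.swap b) = X a b) : ∃ q, queerHom h2 q = X := by
  have h₁ : X.toBlocks₂₁ = X.toBlocks₁₂ := ext fun a b => hX (Sum.inl a) (Sum.inr b)
  have h₂ : X.toBlocks₂₂ = X.toBlocks₁₁ := ext fun a b => hX (Sum.inl a) (Sum.inl b)
  refine ⟨_, (queerHom_add_sub h2 X.toBlocks₁₁ X.toBlocks₁₂).trans ?_⟩
  conv_rhs => rw [← fromBlocks_toBlocks X, h₁, h₂]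

end

variable {n : ℕ}

theorem queerHom_mem_matSuper_iff (h2 : (2 : F) ≠ 0) (p : ZMod 2)
    (q : Matrix (Fin n) (Fin n) F × Matrix (Fin n) (Fin n) F) :
    queerHom h2 q ∈ matSuper F n n p ↔ q.swap = superSign F 1 p • q := by
  obtain ⟨X, Y⟩ := q
  rw [queerHom_apply]
  rcases parity_cases p with rfl | rfl
  · rw [fromBlocks_mem_matSuper_zero_iff]
    simp [superSign, smul_eq_zero_iff_right (inv_ne_zero h2), sub_eq_zero, Prod.ext_iff,
      eq_comm]
  · rw [fromBlocks_mem_matSuper_one_iff]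
    simpa [superSign, smul_eq_zero_iff_right (inv_ne_zero h2), add_eq_zero_iff_eq_neg,
      Prod.ext_iff, -smul_add] using fun h : X = -Y => (neg_eq_iff_eq_neg.mpr h).symm

theorem qTransp_fromBlocks (c : F) (A B C D : Matrix (Fin n) (Fin n) F) :
    qTransp F c (fromBlocks A B C D) = fromBlocks Aᵀ (c • Bᵀ) (c • Cᵀ) Dᵀ := by
  ext (a | a) (b | b) <;> simp [qTransp, retag, matPar]

theorem qTransp_add (c : F) (X Y : Matrix (Fin n ⊕ Fin n) (Fin n ⊕ Fin n) F) :
    qTransp F c (X + Y) = qTransp F c X + qTransp F c Y :=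
  ext fun _ _ => mul_add _ _ _

theorem qTransp_neg_qTransp {c : F} (hc : c ^ 2 = -1)
    (X : Matrix (Fin n ⊕ Fin n) (Fin n ⊕ Fin n) F) : qTransp F (-c) (qTransp F c X) = X := by
  rw [← fromBlocks_toBlocks X, qTransp_fromBlocks, qTransp_fromBlocks]
  simp [smul_smul, ← sq, hc]

end Queer

section QueerRep

variable {F T : Type*} [Field F] [Ring T] [Algebra F T] {θ : T →ₐ[F] Tᵐᵒᵖ}

section

variable {ι : Type*} [Fintype ι] [DecidableEq ι]

/-- The homomorphism to the queer algebra whose components are a representation `f` and its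
twist by the square of `θ`. -/
def queerRep (h2 : (2 : F) ≠ 0) (θ : T →ₐ[F] Tᵐᵒᵖ) (f : T →ₐ[F] Matrix ι ι F) :
    T →ₐ[F] Matrix (ι ⊕ ι) (ι ⊕ ι) F :=
  (queerHom h2).comp (f.prod (f.comp (antiSquare θ)))

theorem not_ker_le_ker_iterate_dualRep_of_lt_four {f : T →ₐ[F] Matrix ι ι F}
    (hσ : ∀ x, antiSquare θ (antiSquare θ x) = x)
    (hker : ¬RingHom.ker f ≤ RingHom.ker ((dualRep θ)^[2] f)) {j : ℕ} (hj0 : 0 < j) (hj : j < 4) :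
    ¬RingHom.ker f ≤ RingHom.ker ((dualRep θ)^[j] f) := by
  have hker₁ : ¬RingHom.ker f ≤ RingHom.ker ((dualRep θ)^[1] f) :=
    fun h => hker (ker_le_ker_iterate_dualRep_mul h 2)
  interval_cases j
  · exact hker₁
  · exact hker
  · exact fun h => hker₁ (ker_le_ker_iterate_dualRep_of_three_mul hσ h)

theorem IsAntiSimple.bijective_prod_dualRep [Nonempty ι] (hθ : IsAntiSimple θ)
    (hσ : ∀ x, antiSquare θ (antiSquare θ x) = x) {f : T →ₐ[F] Matrix ι ι F}
    (hf : Function.Surjective f) (hker : ¬RingHom.ker f ≤ RingHom.ker ((dualRep θ)^[2] f)) :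
    Function.Bijective ((f.prod (f.comp (antiSquare θ))).prod
      ((dualRep θ f).prod ((dualRep θ f).comp (antiSquare θ)))) := by
  have hbij := hθ.bijective_iterate_dualRep hσ hf (k := 4) (by norm_num)
    (by rw [← mul_one 4, iterate_dualRep_four_mul hσ]) fun j hj0 hj =>
      not_ker_le_ker_iterate_dualRep_of_lt_four hσ hker hj0 hj
  refine ⟨fun x y hxy => hbij.1 ?_, fun ⟨⟨A, B⟩, C, D⟩ => ?_⟩
  · simp only [AlgHom.prod_apply, Prod.mk.injEq] at hxy
    ext1 j
    fin_cases j
    exacts [hxy.1.1, hxy.2.1, hxy.1.2, hxy.2.2]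
  · obtain ⟨x, hx⟩ := hbij.2 ![A, C, B, D]
    exact ⟨x, Prod.ext (Prod.ext (congrFun hx 0) (congrFun hx 2))
      (Prod.ext (congrFun hx 1) (congrFun hx 3))⟩

/-- The pair of queer representations attached to `f` and to its dual. -/
def queerPair (h2 : (2 : F) ≠ 0) (θ : T →ₐ[F] Tᵐᵒᵖ) (f : T →ₐ[F] Matrix ι ι F) :
    T →ₐ[F] Matrix (ι ⊕ ι) (ι ⊕ ι) F × Matrix (ι ⊕ ι) (ι ⊕ ι) F :=
  (queerRep h2 θ f).prod (queerRep h2 θ (dualRep θ f))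

theorem queerPair_injective (h2 : (2 : F) ≠ 0) {f : T →ₐ[F] Matrix ι ι F}
    (hf : Function.Injective ((f.prod (f.comp (antiSquare θ))).prod
      ((dualRep θ f).prod ((dualRep θ f).comp (antiSquare θ))))) :
    Function.Injective (queerPair h2 θ f) :=
  ((queerHom_injective h2).prodMap (queerHom_injective h2)).comp hf

theorem exists_queerPair_eq (h2 : (2 : F) ≠ 0) {f : T →ₐ[F] Matrix ι ι F}
    (hf : Function.Surjective ((f.prod (f.comp (antiSquare θ))).prod
      ((dualRep θ f).prod ((dualRep θ f).comp (antiSquare θ)))))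
    {X Y : Matrix (ι ⊕ ι) (ι ⊕ ι) F} (hX : ∀ a b, X (Sum.swap a) (Sum.swap b) = X a b)
    (hY : ∀ a b, Y (Sum.swap a) (Sum.swap b) = Y a b) : ∃ x, queerPair h2 θ f x = (X, Y) := by
  obtain ⟨q, rfl⟩ := exists_queerHom_eq h2 hX
  obtain ⟨r, rfl⟩ := exists_queerHom_eq h2 hY
  obtain ⟨x, hx⟩ := hf (q, r)
  exact ⟨x, congrArg (Prod.map (queerHom h2) (queerHom h2)) hx⟩

end

section

variable {n : ℕ} {f : T →ₐ[F] Matrix (Fin n) (Fin n) F} {S : ZMod 2 → Submodule F T}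
  {φ : T →ₗ[F] T} {i : F} (hφ : IsSuperinvolution F S φ) (hi : i ^ 2 = -1) (hθ : IsTwist S φ i θ)
  (h2 : (2 : F) ≠ 0)
include hφ hi hθ

theorem queerRep_mem_matSuper_iff (hS : IsSuperGrading F S) (p : ZMod 2) (x : T) :
    queerRep h2 θ f x ∈ matSuper F n n p ↔
      queerRep h2 θ f (antiSquare θ x) = superSign F 1 p • queerRep h2 θ f x := by
  have hswap : (f.prod (f.comp (antiSquare θ))) (antiSquare θ x) =
      ((f.prod (f.comp (antiSquare θ))) x).swap :=
    Prod.ext rfl (congrArg f (antiSquare_antiSquare hφ hi hθ hS x))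
  rw [queerRep, AlgHom.comp_apply, AlgHom.comp_apply, queerHom_mem_matSuper_iff, ← hswap,
    ← map_smul (queerHom h2), (queerHom_injective h2).eq_iff]

theorem queerRep_of_mem_zero {x : T} (hx : x ∈ S 0) :
    queerRep h2 θ f x = fromBlocks (f x) 0 0 (f x) := by
  change queerHom h2 (f x, f (antiSquare θ x)) = _
  rw [antiSquare_apply_of_mem hφ hi hθ hx, superSign, if_neg (by decide), one_smul,
    queerHom_apply_self]

theorem queerRep_of_mem_one {x : T} (hx : x ∈ S 1) :
    queerRep h2 θ f x = fromBlocks 0 (f x) (f x) 0 := by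
  change queerHom h2 (f x, f (antiSquare θ x)) = _
  rw [antiSquare_apply_of_mem hφ hi hθ hx, superSign, if_pos (by decide), neg_one_smul, map_neg,
    queerHom_apply_neg]

variable (hS : IsSuperGrading F S)
include hS

theorem queerRep_dualRep_apply (x : T) :
    queerRep h2 θ (dualRep θ f) (φ x) = qTransp F i (queerRep h2 θ f x) := by
  induction x using homogeneous_induction hS with
  | add a b ha hb => simp only [map_add, qTransp_add, ha, hb]
  | mem p x hx =>
    have hφx := hφ.graded p x hx
    have hdual : dualRep θ f (φ x) = (f (θ (φ x)).unop)ᵀ := rfl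
    rcases parity_cases p with rfl | rfl
    · rw [queerRep_of_mem_zero hφ hi hθ h2 hφx, queerRep_of_mem_zero hφ hi hθ h2 hx, hdual,
        hθ.even _ hφx, hφ.invol, qTransp_fromBlocks, transpose_zero, smul_zero]
    · rw [queerRep_of_mem_one hφ hi hθ h2 hφx, queerRep_of_mem_one hφ hi hθ h2 hx, hdual,
        hθ.odd _ hφx, hφ.invol, qTransp_fromBlocks, map_smul, transpose_smul, transpose_zero]

theorem queerRep_apply (x : T) :
    queerRep h2 θ f (φ x) = qTransp F (-i) (queerRep h2 θ (dualRep θ f) x) := by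
  rw [← qTransp_neg_qTransp hi (queerRep h2 θ f (φ x)),
    ← queerRep_dualRep_apply hφ hi hθ h2 hS, hφ.invol]

theorem queerPair_apply (x : T) :
    queerPair h2 θ f (φ x) =
      (qTransp F (-i) (queerPair h2 θ f x).2, qTransp F i (queerPair h2 θ f x).1) :=
  Prod.ext (queerRep_apply hφ hi hθ h2 hS x) (queerRep_dualRep_apply hφ hi hθ h2 hS x)

theorem mem_iff_queerPair_mem_matSuper (hf : Function.Injective (queerPair h2 θ f)) (p : ZMod 2)
    (x : T) : x ∈ S p ↔
      (queerPair h2 θ f x).1 ∈ matSuper F n n p ∧ (queerPair h2 θ f x).2 ∈ matSuper F n n p := by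
  rw [mem_iff_antiSquare_apply hφ hi hθ hS h2, ← hf.eq_iff, map_smul, Prod.ext_iff]
  exact and_congr (queerRep_mem_matSuper_iff hφ hi hθ h2 hS p x).symm
    (queerRep_mem_matSuper_iff hφ hi hθ h2 hS p x).symm

end

end QueerRep

end SuperInvolution

open SuperInvolution

/-- **Proposition.** Any finite-dimensional involution simple associative superalgebra
with superinvolution `*` over an algebraically closed field of characteristic `≠ 2` is
isomorphic to one of: (1) `M_{n,m}(F)` with the orthosymplectic or transpose
superinvolution; (2) `M_{n,m}(F) ⊕ M_{n,m}(F)^{sop}` with the exchange superinvolution;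
(3) `Q(n) ⊕ Q(n)^{sop}` with the exchange superinvolution.

Here `A ⊕ A^{sop}` with the exchange superinvolution `(a,b) ↦ (b,a)` is presented in the
isomorphic form `A × A` (componentwise product) with the superinvolution
`(x, y) ↦ (s⁻¹ y, s x)`, where `s` is a super-antiautomorphism of `A` realising
`A^{sop} ≅ A`:  for `A = M_{n,m}(F)` one takes `s = τ` (the supertranspose `tauL`),
and for `A = Q(n)` one takes `s = qTransp c` with `c² = -1` (whose inverse is
`qTransp (-c)`).  `Q(n)` is presented as the subalgebra of `Sum.swap`-invariant
matrices of `M_{n,n}(F)`, and case (3) is phrased via an injective algebra homomorphism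
onto `Q(n) × Q(n)`. -/
theorem star_simple_superalgebra_classification
    (F : Type*) [Field F] [IsAlgClosed F] (hchar : (2 : F) ≠ 0)
    (T : Type*) [Ring T] [Algebra F T] [FiniteDimensional F T] [Nontrivial T]
    (S : ZMod 2 → Submodule F T) (hS : IsSuperGrading F S)
    (φ : T →ₗ[F] T) (hφ : IsSuperinvolution F S φ)
    -- `T` is `*`-simple: no nontrivial graded two-sided `*`-stable ideals
    (hsimple : ∀ I : Submodule F T,
      (∀ x ∈ I, ∀ r : T, r * x ∈ I ∧ x * r ∈ I) → I = (I ⊓ S 0) ⊔ (I ⊓ S 1) →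
      (∀ x ∈ I, φ x ∈ I) → I = ⊥ ∨ I = ⊤) :
    -- (1a) `M_{n,2k}(F)` with the orthosymplectic superinvolution
    (∃ (n k : ℕ), ∃ e : T ≃ₐ[F] Matrix (Fin n ⊕ Fin (2 * k)) (Fin n ⊕ Fin (2 * k)) F,
      (∀ p, (S p).map e.toLinearMap = matSuper F n (2 * k) p) ∧
      (∀ x, e (φ x) = matStarL F (Matrix.fromBlocks 1 0 0 (stdQ F k)) (e x))) ∨
    -- (1b) `M_{n,n}(F)` with the transpose superinvolution
    (∃ n : ℕ, ∃ e : T ≃ₐ[F] Matrix (Fin n ⊕ Fin n) (Fin n ⊕ Fin n) F,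
      (∀ p, (S p).map e.toLinearMap = matSuper F n n p) ∧
      (∀ x, e (φ x)
        = matStarL F (Matrix.fromBlocks 0 (1 : Matrix (Fin n) (Fin n) F) 1 0) (e x))) ∨
    -- (2) `M_{n,m}(F) ⊕ M_{n,m}(F)^{sop}` with the exchange superinvolution
    (∃ (n m : ℕ), ∃ e : T ≃ₐ[F]
        (Matrix (Fin n ⊕ Fin m) (Fin n ⊕ Fin m) F ×
          Matrix (Fin n ⊕ Fin m) (Fin n ⊕ Fin m) F),
      (∀ p, (S p).map e.toLinearMap = (matSuper F n m p).prod (matSuper F n m p)) ∧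
      (∀ x, e (φ x) = (tauInvL F matPar (e x).2, tauL F matPar (e x).1))) ∨
    -- (3) `Q(n) ⊕ Q(n)^{sop}` with the exchange superinvolution
    (∃ (n : ℕ) (c : F), c ^ 2 = -1 ∧
      ∃ ψ : T →ₐ[F] (Matrix (Fin n ⊕ Fin n) (Fin n ⊕ Fin n) F ×
          Matrix (Fin n ⊕ Fin n) (Fin n ⊕ Fin n) F),
        Function.Injective ψ ∧
        (∀ x, (∀ a b, (ψ x).1 (Sum.swap a) (Sum.swap b) = (ψ x).1 a b) ∧
              (∀ a b, (ψ x).2 (Sum.swap a) (Sum.swap b) = (ψ x).2 a b)) ∧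
        (∀ X Y : Matrix (Fin n ⊕ Fin n) (Fin n ⊕ Fin n) F,
          (∀ a b, X (Sum.swap a) (Sum.swap b) = X a b) →
          (∀ a b, Y (Sum.swap a) (Sum.swap b) = Y a b) → ∃ x, ψ x = (X, Y)) ∧
        (∀ (p : ZMod 2) (x : T), x ∈ S p ↔
          ((ψ x).1 ∈ matSuper F n n p ∧ (ψ x).2 ∈ matSuper F n n p)) ∧
        (∀ x, ψ (φ x) = (qTransp F (-c) (ψ x).2, qTransp F c (ψ x).1))) := by
  obtain ⟨i, hi⟩ := IsAlgClosed.exists_pow_nat_eq (-1 : F) (n := 2) two_pos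
  obtain ⟨θ, hθ⟩ := exists_isTwist hS hφ hi
  have hsimple' := isAntiSimple_of_isTwist hφ hi hθ hS hchar hsimple
  have hσ := antiSquare_antiSquare hφ hi hθ hS
  obtain ⟨N, hN, f, hf⟩ := exists_surjective_algHom_matrix F T
  by_cases hker₁ : RingHom.ker f ≤ RingHom.ker (dualRep θ f)
  · obtain ⟨n, m, e, Ψ, hΨ, h, hsymm | hskew⟩ :=
      hsimple'.exists_isFormRep_transpose_eq hchar hi hσ hf hker₁
    · obtain ⟨k, e', h'⟩ := h.exists_orthosymplectic hchar hi hΨ hsymm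
      have hmap := h'.map_eq_matSuper hφ hi hθ hS hchar
      exact Or.inl ⟨n, k, e', hmap,
        h'.apply_eq_matStarL (isUnit_fromBlocks_one_stdQ k) hi hθ hS hmap⟩
    · obtain ⟨e', h'⟩ := h.exists_transpose hchar hi hΨ hskew
      have hmap := h'.map_eq_matSuper hφ hi hθ hS hchar
      exact Or.inr (Or.inl ⟨_, e', hmap,
        h'.apply_eq_matStarL isUnit_fromBlocks_zero_one hi hθ hS hmap⟩)
  by_cases hker₂ : RingHom.ker f ≤ RingHom.ker ((dualRep θ)^[2] f)
  · obtain ⟨n, m, e, h⟩ := hsimple'.exists_isDualPairRep hchar hi hσ hf hker₁ hker₂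
    have hmap := h.map_eq_prod_matSuper hφ hi hθ hS hchar
    exact Or.inr (Or.inr (Or.inl ⟨n, m, e, hmap, h.apply_eq hφ hi hθ hS hmap⟩))
  · have hbij := hsimple'.bijective_prod_dualRep hσ hf hker₂
    have hinj := queerPair_injective hchar hbij.1
    exact Or.inr (Or.inr (Or.inr ⟨N, i, hi, queerPair hchar θ f, hinj,
      fun x => ⟨queerHom_apply_swap hchar _, queerHom_apply_swap hchar _⟩,
      fun X Y => exists_queerPair_eq hchar hbij.2,
      mem_iff_queerPair_mem_matSuper hφ hi hθ hchar hS hinj, queerPair_apply hφ hi hθ hchar hS⟩))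
end
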